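/- arXiv:2509.00769 — 2 statements merged into one kernel-verified Lean document; each statement's English description precedes it below -/
import Mathlib

section
/- Let a and b be positive integers with b > a, and let G be a connected graph of order n ≥ 2(a+b+2)(b+2) with minimum degree δ(G) ≥ a. If ρ(G) ≥ ρ(H_n^{a,b}), then G contains a fractional [a,b]-factor, unless G is isomorphic to H_n^{a,b}. -/
open Finset Matrix

namespace SimpleGraph

variable {V : Type*} [Fintype V] [DecidableEq V]

lemma isHermitian_adjMatrix' (G : SimpleGraph V) [DecidableRel G.Adj] :
    (G.adjMatrix ℝ).IsHermitian := by
  rw [Matrix.IsHermitian, conjTranspose_eq_transpose_of_trivial, isSymm_adjMatrix]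

/-- The spectral radius (largest adjacency eigenvalue) of a finite simple graph. -/
noncomputable def spectralRadius (G : SimpleGraph V) : ℝ :=
  letI := Classical.decRel G.Adj
  ⨆ i, (isHermitian_adjMatrix' G).eigenvalues i

/-- `G` has an `[a,b]`-factor: a spanning subgraph all of whose degrees lie in `[a,b]`. -/
def HasABFactor (G : SimpleGraph V) (a b : ℕ) : Prop :=
  ∃ H : SimpleGraph V, H ≤ G ∧ ∀ v : V,
    letI := Classical.decRel H.Adj
    a ≤ H.degree v ∧ H.degree v ≤ b

/-- `G` has a fractional `[a,b]`-factor: a weighting of the edges by values in `[0,1]`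
such that the total weight at every vertex lies in `[a,b]`. -/
def HasFractionalABFactor (G : SimpleGraph V) (a b : ℕ) : Prop :=
  letI := Classical.decRel G.Adj
  ∃ h : Sym2 V → ℝ, (∀ e ∈ G.edgeSet, 0 ≤ h e ∧ h e ≤ 1) ∧
    ∀ v : V, (a : ℝ) ≤ ∑ e ∈ G.incidenceFinset v, h e ∧
      ∑ e ∈ G.incidenceFinset v, h e ≤ (b : ℝ)

end SimpleGraph

/-- `K_a ∨ (K_{n-a-b-1} ∪ (b+1)K_1)`, with vertices `0,…,a-1` forming the `K_a`,
vertices `a,…,n-b-2` forming the `K_{n-a-b-1}`, and the last `b+1` vertices independent. -/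
def baseGraph (n a b : ℕ) : SimpleGraph (Fin n) :=
  SimpleGraph.fromRel (fun i j => (i : ℕ) < a ∨ ((i : ℕ) < n - b - 1 ∧ (j : ℕ) < n - b - 1))

/-- The graph `H_n^{a,b}`: `baseGraph n a b` together with `a-1` extra edges joining the
vertex `n-b-1` (a fixed vertex of the independent part `(b+1)K_1`) to the `a-1`
vertices `a,…,2a-2` of the `K_{n-a-b-1}` part. -/
def Hgraph (n a b : ℕ) : SimpleGraph (Fin n) :=
  SimpleGraph.fromRel (fun i j => (i : ℕ) < a ∨ ((i : ℕ) < n - b - 1 ∧ (j : ℕ) < n - b - 1) ∨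
    ((i : ℕ) = n - b - 1 ∧ a ≤ (j : ℕ) ∧ (j : ℕ) < 2 * a - 1))

/-- The family `𝒢_n^{a,b}`: graphs obtained from `baseGraph n a b` by adding `a-1` edges
between the clique part `{a,…,n-b-2}` and the independent part `{n-b-1,…,n-1}`. -/
def GFamily (n a b : ℕ) (G : SimpleGraph (Fin n)) : Prop :=
  ∃ F : Finset (Fin n × Fin n), F.card = a - 1 ∧
    (∀ p ∈ F, a ≤ (p.1 : ℕ) ∧ (p.1 : ℕ) < n - b - 1 ∧ n - b - 1 ≤ (p.2 : ℕ)) ∧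
    G = baseGraph n a b ⊔ SimpleGraph.fromEdgeSet ((fun p : Fin n × Fin n => s(p.1, p.2)) '' F)

/-!
By linear programming duality, a graph without a fractional `[a,b]`-factor has disjoint vertex sets
`S`, `T` with `b|S| + ∑_{v ∈ T} (deg_{G-S} v - a) < 0`. Since `ρ(G) ≥ ρ(H_n^{a,b}) ≥ n - b - 2`
forces `G` to have many edges, this leaves only `|T| = b + 1` with degree sum in `T` less than
`a(b + 2)`. Make `G` complete off `T` to get `K`, and place `H ≅ H_n^{a,b}` on the same vertices so
that its sparse vertices are `T` and their neighbours are the vertices on which the Perron vector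
`x` of `K` is largest. With `y` the Perron vector of `H`, the form `yᵀ(A_K - A_H)x =
(ρ(K) - ρ(H)) yᵀx` is nonnegative and only sees edges meeting `T`; comparing these edges vertex by
vertex shows that it is nonpositive and vanishes only if `K = H`. Then `ρ(G) ≥ ρ(K)` with `G ≤ K`
gives `G = K`.
-/

/-! ### The spectral radius and Perron vectors -/

section SpectralRadius

variable {V W : Type*} [Fintype V] [Fintype W]

lemma neighborFinset_mono {G G' : SimpleGraph V} [DecidableRel G.Adj] [DecidableRel G'.Adj]
    (hle : G ≤ G') (v : V) : G.neighborFinset v ⊆ G'.neighborFinset v :=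
  fun u hu => by simpa using hle (by simpa using hu)

lemma dotProduct_adjMatrix_mulVec_mono {G G' : SimpleGraph V} [DecidableRel G.Adj]
    [DecidableRel G'.Adj] (hle : G ≤ G') {x : V → ℝ} (hx : 0 ≤ x) :
    x ⬝ᵥ G.adjMatrix ℝ *ᵥ x ≤ x ⬝ᵥ G'.adjMatrix ℝ *ᵥ x := by
  refine dotProduct_le_dotProduct_of_nonneg_left (fun v => ?_) hx
  simp only [SimpleGraph.adjMatrix_mulVec_apply]
  exact sum_le_sum_of_subset_of_nonneg (neighborFinset_mono hle v) fun u _ _ => hx u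

variable [DecidableEq V] [DecidableEq W]

lemma spectralRadius_eq_iSup_eigenvalues (G : SimpleGraph V) [DecidableRel G.Adj] :
    G.spectralRadius = ⨆ i, G.isHermitian_adjMatrix'.eigenvalues i := by
  unfold SimpleGraph.spectralRadius
  congr!

open MatrixOrder in
lemma posSemidef_spectralRadius_smul_one_sub_adjMatrix (G : SimpleGraph V) [DecidableRel G.Adj] :
    (G.spectralRadius • (1 : Matrix V V ℝ) - G.adjMatrix ℝ).PosSemidef := by
  rw [← Matrix.le_iff, ← Algebra.algebraMap_eq_smul_one]
  refine le_algebraMap_of_spectrum_le ?_ G.isHermitian_adjMatrix'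
  rw [G.isHermitian_adjMatrix'.spectrum_real_eq_range_eigenvalues,
    spectralRadius_eq_iSup_eigenvalues]
  rintro _ ⟨i, rfl⟩
  exact le_ciSup (Set.finite_range _).bddAbove i

lemma dotProduct_spectralRadius_smul_one_sub_adjMatrix_mulVec (G : SimpleGraph V)
    [DecidableRel G.Adj] (z : V → ℝ) :
    z ⬝ᵥ (G.spectralRadius • (1 : Matrix V V ℝ) - G.adjMatrix ℝ) *ᵥ z =
      G.spectralRadius * (z ⬝ᵥ z) - z ⬝ᵥ G.adjMatrix ℝ *ᵥ z := by
  simp [sub_mulVec, smul_mulVec, dotProduct_sub]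

lemma dotProduct_adjMatrix_mulVec_self_le (G : SimpleGraph V) [DecidableRel G.Adj] (z : V → ℝ) :
    z ⬝ᵥ G.adjMatrix ℝ *ᵥ z ≤ G.spectralRadius * (z ⬝ᵥ z) := by
  have := (posSemidef_spectralRadius_smul_one_sub_adjMatrix G).dotProduct_mulVec_nonneg z
  rw [star_trivial, dotProduct_spectralRadius_smul_one_sub_adjMatrix_mulVec] at this
  linarith

lemma adjMatrix_mulVec_eq_of_le_dotProduct (G : SimpleGraph V) [DecidableRel G.Adj] {z : V → ℝ}
    (h : G.spectralRadius * (z ⬝ᵥ z) ≤ z ⬝ᵥ G.adjMatrix ℝ *ᵥ z) :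
    G.adjMatrix ℝ *ᵥ z = G.spectralRadius • z := by
  have hpsd := posSemidef_spectralRadius_smul_one_sub_adjMatrix G
  have := (hpsd.dotProduct_mulVec_zero_iff z).1 <| by
    rw [star_trivial, dotProduct_spectralRadius_smul_one_sub_adjMatrix_mulVec]
    linarith [dotProduct_adjMatrix_mulVec_self_le G z]
  simpa [sub_mulVec, smul_mulVec, sub_eq_zero, eq_comm] using this

lemma card_sub_one_le_spectralRadius_of_isClique {G : SimpleGraph V} {s : Finset V}
    (hs : G.IsClique (s : Set V)) (hne : s.Nonempty) : (#s : ℝ) - 1 ≤ G.spectralRadius := by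
  classical
  let z : V → ℝ := fun v => if v ∈ s then 1 else 0
  have hnorm : z ⬝ᵥ z = #s := by simp [z, dotProduct]
  have hform : z ⬝ᵥ G.adjMatrix ℝ *ᵥ z = #s * (#s - 1) := by
    have hrow : ∀ v ∈ s, (G.adjMatrix ℝ *ᵥ z) v = #s - 1 := fun v hv => by
      have : G.neighborFinset v ∩ s = s.erase v := by
        ext u
        simp only [mem_inter, SimpleGraph.mem_neighborFinset, mem_erase]
        exact ⟨fun h => ⟨h.1.ne', h.2⟩, fun h => ⟨hs hv h.2 h.1.symm, h.2⟩⟩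
      simp [z, SimpleGraph.adjMatrix_mulVec_apply, this, card_erase_of_mem hv,
        Nat.cast_sub (card_pos.2 hne)]
    calc z ⬝ᵥ G.adjMatrix ℝ *ᵥ z = ∑ v ∈ s, (G.adjMatrix ℝ *ᵥ z) v := by simp [z, dotProduct]
      _ = #s * (#s - 1) := by rw [sum_congr rfl hrow, sum_const, nsmul_eq_mul]
  have := dotProduct_adjMatrix_mulVec_self_le G z
  rw [hnorm, hform, mul_comm] at this
  exact le_of_mul_le_mul_right this (by exact_mod_cast hne.card_pos)

/-- A Perron vector of `G`: a nonzero nonnegative eigenvector of the adjacency matrix for the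
eigenvalue `ρ(G)`. No normalisation is imposed. -/
structure IsPerronVector (G : SimpleGraph V) [DecidableRel G.Adj] (x : V → ℝ) : Prop where
  nonneg : 0 ≤ x
  ne_zero : x ≠ 0
  mulVec_eq : G.adjMatrix ℝ *ᵥ x = G.spectralRadius • x

lemma exists_isPerronVector [Nonempty V] (G : SimpleGraph V) [DecidableRel G.Adj] :
    ∃ x, IsPerronVector G x := by
  have hA := G.isHermitian_adjMatrix'
  obtain ⟨i, hi⟩ := exists_eq_ciSup_of_finite (f := hA.eigenvalues)
  rw [← spectralRadius_eq_iSup_eigenvalues G] at hi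
  let z : V → ℝ := (hA.eigenvectorBasis i).ofLp
  have hz_eigen : G.adjMatrix ℝ *ᵥ z = G.spectralRadius • z := hi ▸ hA.mulVec_eigenvectorBasis i
  have hz_ne : z ≠ 0 := fun h =>
    hA.eigenvectorBasis.orthonormal.ne_zero i (by ext v; exact congrFun h v)
  refine ⟨|z|, abs_nonneg z, fun h => hz_ne (funext fun v => abs_eq_zero.1 (congrFun h v)),
    adjMatrix_mulVec_eq_of_le_dotProduct G ?_⟩
  calc G.spectralRadius * (|z| ⬝ᵥ |z|) = z ⬝ᵥ G.adjMatrix ℝ *ᵥ z := by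
        rw [hz_eigen, dotProduct_smul]
        simp [dotProduct]
    _ ≤ |z| ⬝ᵥ G.adjMatrix ℝ *ᵥ |z| := by
        simp only [SimpleGraph.dotProduct_mulVec_adjMatrix, Pi.abs_apply, ← abs_mul]
        gcongr
        split_ifs
        exacts [le_abs_self _, le_rfl]

namespace IsPerronVector

variable {G G' : SimpleGraph V} [DecidableRel G.Adj] [DecidableRel G'.Adj] {x : V → ℝ}

lemma sum_neighborFinset (hx : IsPerronVector G x) (v : V) :
    ∑ u ∈ G.neighborFinset v, x u = G.spectralRadius * x v := by
  simpa [SimpleGraph.adjMatrix_mulVec_apply] using congrFun hx.mulVec_eq v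

lemma dotProduct_self_pos (hx : IsPerronVector G x) : 0 < x ⬝ᵥ x :=
  (sum_nonneg fun v _ => mul_self_nonneg (x v)).lt_of_ne' (dotProduct_self_eq_zero.not.2 hx.ne_zero)

lemma dotProduct_mulVec_eq (hx : IsPerronVector G x) :
    x ⬝ᵥ G.adjMatrix ℝ *ᵥ x = G.spectralRadius * (x ⬝ᵥ x) := by
  rw [hx.mulVec_eq, dotProduct_smul, smul_eq_mul]

lemma pos (hx : IsPerronVector G x) (hG : G.Preconnected) (v : V) : 0 < x v := by
  have hstep : ∀ u w, G.Adj u w → 0 < x u → 0 < x w := fun u w huw hu => by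
    refine (hx.nonneg w).lt_of_ne' fun hw => ?_
    have hsum := hx.sum_neighborFinset w
    rw [hw, Pi.zero_apply, mul_zero, sum_eq_zero_iff_of_nonneg fun u _ => hx.nonneg u] at hsum
    exact hu.ne' (hsum u (by simpa using huw.symm))
  obtain ⟨w, hw⟩ := Function.ne_iff.1 hx.ne_zero
  obtain ⟨p⟩ := hG w v
  have hw_pos : 0 < x w := (hx.nonneg w).lt_of_ne' hw
  clear hw
  induction p with
  | nil => exact hw_pos
  | cons h _ ih => exact ih (hstep _ _ h hw_pos)

lemma of_le (hx : IsPerronVector G x) (hle : G ≤ G') (hρ : G'.spectralRadius ≤ G.spectralRadius) :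
    IsPerronVector G' x where
  nonneg := hx.nonneg
  ne_zero := hx.ne_zero
  mulVec_eq := adjMatrix_mulVec_eq_of_le_dotProduct G' <| calc
    G'.spectralRadius * (x ⬝ᵥ x) ≤ G.spectralRadius * (x ⬝ᵥ x) := by
        gcongr; exact hx.dotProduct_self_pos.le
    _ = x ⬝ᵥ G.adjMatrix ℝ *ᵥ x := hx.dotProduct_mulVec_eq.symm
    _ ≤ x ⬝ᵥ G'.adjMatrix ℝ *ᵥ x := dotProduct_adjMatrix_mulVec_mono hle hx.nonneg

end IsPerronVector

lemma spectralRadius_mono [Nonempty V] {G G' : SimpleGraph V} (hle : G ≤ G') :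
    G.spectralRadius ≤ G'.spectralRadius := by
  classical
  obtain ⟨x, hx⟩ := exists_isPerronVector G
  refine le_of_mul_le_mul_right ?_ hx.dotProduct_self_pos
  calc G.spectralRadius * (x ⬝ᵥ x) = x ⬝ᵥ G.adjMatrix ℝ *ᵥ x := hx.dotProduct_mulVec_eq.symm
    _ ≤ x ⬝ᵥ G'.adjMatrix ℝ *ᵥ x := dotProduct_adjMatrix_mulVec_mono hle hx.nonneg
    _ ≤ G'.spectralRadius * (x ⬝ᵥ x) := dotProduct_adjMatrix_mulVec_self_le G' x

lemma eq_of_le_of_spectralRadius_le [Nonempty V] {G G' : SimpleGraph V} (hle : G ≤ G')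
    (hconn : G'.Preconnected) (hρ : G'.spectralRadius ≤ G.spectralRadius) : G = G' := by
  classical
  obtain ⟨x, hx⟩ := exists_isPerronVector G
  have hx' := hx.of_le hle hρ
  refine hle.antisymm fun v u hvu => ?_
  by_contra hnot
  have hlt : ∑ w ∈ G.neighborFinset v, x w < ∑ w ∈ G'.neighborFinset v, x w :=
    sum_lt_sum_of_subset (neighborFinset_mono hle v) (by simpa using hvu)
      (by simpa using hnot) (hx'.pos hconn u) fun w _ _ => hx.nonneg w
  rw [hx.sum_neighborFinset, hx'.sum_neighborFinset] at hlt
  exact hlt.not_ge (mul_le_mul_of_nonneg_right hρ (hx.nonneg v))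

lemma spectralRadius_le_of_iso [Nonempty V] {G : SimpleGraph V} {H : SimpleGraph W} (e : G ≃g H) :
    G.spectralRadius ≤ H.spectralRadius := by
  classical
  obtain ⟨x, hx⟩ := exists_isPerronVector G
  refine le_of_mul_le_mul_right ?_ hx.dotProduct_self_pos
  have hform : (x ∘ e.symm) ⬝ᵥ H.adjMatrix ℝ *ᵥ (x ∘ e.symm) = x ⬝ᵥ G.adjMatrix ℝ *ᵥ x := by
    simp only [SimpleGraph.dotProduct_mulVec_adjMatrix, ← e.toEquiv.sum_comp]
    simp [e.map_adj_iff]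
  calc G.spectralRadius * (x ⬝ᵥ x) = x ⬝ᵥ G.adjMatrix ℝ *ᵥ x := hx.dotProduct_mulVec_eq.symm
    _ ≤ H.spectralRadius * ((x ∘ e.symm) ⬝ᵥ (x ∘ e.symm)) :=
        hform ▸ dotProduct_adjMatrix_mulVec_self_le H _
    _ = H.spectralRadius * (x ⬝ᵥ x) :=
        congrArg _ (comp_equiv_dotProduct_comp_equiv x x e.symm.toEquiv)

lemma spectralRadius_eq_of_iso [Nonempty V] [Nonempty W] {G : SimpleGraph V} {H : SimpleGraph W}
    (e : G ≃g H) : G.spectralRadius = H.spectralRadius :=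
  (spectralRadius_le_of_iso e).antisymm (spectralRadius_le_of_iso e.symm)

lemma spectralRadius_sq_le_sum_degree [Nonempty V] (G : SimpleGraph V) [DecidableRel G.Adj] :
    G.spectralRadius ^ 2 ≤ ∑ v, (G.degree v : ℝ) := by
  obtain ⟨x, hx⟩ := exists_isPerronVector G
  refine le_of_mul_le_mul_right ?_ hx.dotProduct_self_pos
  calc G.spectralRadius ^ 2 * (x ⬝ᵥ x) = ∑ v, (∑ u ∈ G.neighborFinset v, x u) ^ 2 := by
        simp only [hx.sum_neighborFinset, dotProduct, mul_sum]
        exact sum_congr rfl fun v _ => by ring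
    _ ≤ ∑ v, G.degree v * (x ⬝ᵥ x) := sum_le_sum fun v _ =>
        sq_sum_le_card_mul_sum_sq.trans <| by
          rw [SimpleGraph.card_neighborFinset_eq_degree]
          gcongr
          simp only [dotProduct, ← sq]
          exact sum_le_univ_sum_of_nonneg fun u => sq_nonneg (x u)
    _ = (∑ v, (G.degree v : ℝ)) * (x ⬝ᵥ x) := (sum_mul ..).symm

end SpectralRadius

/-! ### Bilinear forms split along a vertex set -/

section Block

variable {V : Type*} [Fintype V] [DecidableEq V]

lemma dotProduct_mulVec_add_sum_sum_eq {A : Matrix V V ℝ} (hA : A.IsSymm) (T : Finset V)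
    (x y : V → ℝ) :
    y ⬝ᵥ A *ᵥ x + ∑ v ∈ T, ∑ u ∈ T, y v * A v u * x u =
      ∑ v ∈ T, (y v * (A *ᵥ x) v + x v * (A *ᵥ y) v) +
        ∑ v ∈ Tᶜ, ∑ u ∈ Tᶜ, y v * A v u * x u := by
  have hrow (v : V) : y v * (A *ᵥ x) v =
      ∑ u ∈ T, y v * A v u * x u + ∑ u ∈ Tᶜ, y v * A v u * x u := by
    rw [sum_add_sum_compl]
    simp only [mulVec, dotProduct, mul_sum, mul_assoc]
  have hcol : ∑ v ∈ T, x v * (A *ᵥ y) v =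
      ∑ v ∈ T, ∑ u ∈ T, y v * A v u * x u + ∑ v ∈ Tᶜ, ∑ u ∈ T, y v * A v u * x u := by
    rw [sum_add_sum_compl, sum_comm]
    refine sum_congr rfl fun v _ => ?_
    simp only [mulVec, dotProduct, mul_sum]
    exact sum_congr rfl fun u _ => by rw [← hA.apply v u]; ring
  rw [sum_add_distrib, hcol, dotProduct, ← sum_add_sum_compl T]
  simp only [hrow, sum_add_distrib]
  ring

lemma sum_degree_le_of_compl (G : SimpleGraph V) [DecidableRel G.Adj] (T : Finset V) :
    ∑ v, (G.degree v : ℝ) ≤ #Tᶜ * (#Tᶜ - 1) + 2 * ∑ v ∈ T, (G.degree v : ℝ) := by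
  have hblock := dotProduct_mulVec_add_sum_sum_eq (G.isSymm_adjMatrix (α := ℝ)) T 1 1
  have hT : 0 ≤ ∑ v ∈ T, ∑ u ∈ T, G.adjMatrix ℝ v u :=
    sum_nonneg fun v _ => sum_nonneg fun u _ => by
      rw [SimpleGraph.adjMatrix_apply]; split_ifs <;> norm_num
  have hrow : ∀ v ∈ Tᶜ, ∑ u ∈ Tᶜ, G.adjMatrix ℝ v u ≤ #Tᶜ - 1 := fun v hv => by
    have hsub : {u ∈ Tᶜ | G.Adj v u} ⊆ Tᶜ.erase v := fun u hu => by
      rw [mem_filter] at hu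
      exact mem_erase.2 ⟨hu.2.ne', hu.1⟩
    have hcard := card_le_card hsub
    rw [card_erase_of_mem hv] at hcard
    simp only [SimpleGraph.adjMatrix_apply, sum_boole]
    rw [← Nat.cast_pred (card_pos.2 ⟨v, hv⟩)]
    exact_mod_cast hcard
  have hTc : ∑ v ∈ Tᶜ, ∑ u ∈ Tᶜ, G.adjMatrix ℝ v u ≤ #Tᶜ * (#Tᶜ - 1) := by
    simpa using sum_le_card_nsmul _ _ _ hrow
  simp only [dotProduct, Pi.one_apply, SimpleGraph.adjMatrix_mulVec_apply, sum_const,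
    SimpleGraph.card_neighborFinset_eq_degree, nsmul_eq_mul, mul_one, one_mul,
    sum_add_distrib] at hblock
  linarith

/-- The contribution of the edges at `v`, counted in both directions, to the bilinear form
`y ⬝ᵥ A *ᵥ x` of the adjacency matrix `A` of `G`. -/
def starWeight (G : SimpleGraph V) [DecidableRel G.Adj] (x y : V → ℝ) (v : V) : ℝ :=
  y v * ∑ u ∈ G.neighborFinset v, x u + x v * ∑ u ∈ G.neighborFinset v, y u

lemma sum_starWeight_le_sum_starWeight {H K : SimpleGraph V} [DecidableRel H.Adj]
    [DecidableRel K.Adj] {T : Finset V} (hH : H.IsClique (T : Set V)ᶜ)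
    (hK : K.IsClique (T : Set V)ᶜ) (hT : H.IsIndepSet T) {x y : V → ℝ} (hx : IsPerronVector K x)
    (hy : IsPerronVector H y) (hρ : H.spectralRadius ≤ K.spectralRadius) :
    ∑ v ∈ T, starWeight H x y v ≤ ∑ v ∈ T, starWeight K x y v := by
  have hblockH := dotProduct_mulVec_add_sum_sum_eq (H.isSymm_adjMatrix (α := ℝ)) T x y
  have hblockK := dotProduct_mulVec_add_sum_sum_eq (K.isSymm_adjMatrix (α := ℝ)) T x y
  have hoff : ∑ v ∈ Tᶜ, ∑ u ∈ Tᶜ, y v * H.adjMatrix ℝ v u * x u =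
      ∑ v ∈ Tᶜ, ∑ u ∈ Tᶜ, y v * K.adjMatrix ℝ v u * x u := by
    refine sum_congr rfl fun v hv => sum_congr rfl fun u hu => ?_
    have hadj : H.Adj v u ↔ K.Adj v u := by
      by_cases hvu : v = u
      · simp [hvu]
      · exact iff_of_true (hH (by simpa using hv) (by simpa using hu) hvu)
          (hK (by simpa using hv) (by simpa using hu) hvu)
    simp only [SimpleGraph.adjMatrix_apply, hadj]
  have honH : ∑ v ∈ T, ∑ u ∈ T, y v * H.adjMatrix ℝ v u * x u = 0 :=
    sum_eq_zero fun v hv => sum_eq_zero fun u hu => by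
      have : ¬H.Adj v u := fun h => hT hv hu h.ne h
      simp [this]
  have honK : 0 ≤ ∑ v ∈ T, ∑ u ∈ T, y v * K.adjMatrix ℝ v u * x u :=
    sum_nonneg fun v _ => sum_nonneg fun u _ => by
      rw [SimpleGraph.adjMatrix_apply]
      split_ifs
      exacts [by simpa using mul_nonneg (hy.nonneg v) (hx.nonneg u), by simp]
  have hform : y ⬝ᵥ H.adjMatrix ℝ *ᵥ x ≤ y ⬝ᵥ K.adjMatrix ℝ *ᵥ x := by
    rw [dotProduct_mulVec, ← mulVec_transpose, SimpleGraph.transpose_adjMatrix, hy.mulVec_eq,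
      hx.mulVec_eq, smul_dotProduct, dotProduct_smul]
    exact mul_le_mul_of_nonneg_right hρ
      (sum_nonneg fun v _ => mul_nonneg (hy.nonneg v) (hx.nonneg v))
  simp only [SimpleGraph.adjMatrix_mulVec_apply] at hblockH hblockK
  simp only [starWeight]
  linarith

end Block

/-! ### Deficient pairs of vertex sets -/

section Criterion

open MeasureTheory in
lemma exists_threshold_of_sum_mul_pos {ι : Type*} [Fintype ι] {c d : ι → ℝ}
    (h : 0 < ∑ i, c i * d i) :
    ∃ t, 0 ≤ t ∧ 0 < ∑ i with t < c i, d i - ∑ i with c i < -t, d i := by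
  let slice (r t : ℝ) : ℝ := (Set.Ico 0 r).indicator 1 t
  have hint (r : ℝ) : Integrable (slice r) :=
    (integrable_indicator_iff measurableSet_Ico).2 (by simp [Pi.one_def])
  have hslice (r : ℝ) : ∫ t, slice r t = max r 0 := by
    simp [slice, integral_indicator_one measurableSet_Ico]
  have hint' (i : ι) : Integrable fun t => slice (c i) t * d i - slice (-c i) t * d i :=
    ((hint _).mul_const _).sub ((hint _).mul_const _)
  have hlayer : ∫ t, ∑ i, (slice (c i) t * d i - slice (-c i) t * d i) = ∑ i, c i * d i := by
    rw [integral_finsetSum _ fun i _ => hint' i]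
    refine sum_congr rfl fun i _ => ?_
    rw [integral_sub ((hint _).mul_const _) ((hint _).mul_const _), integral_mul_const,
      integral_mul_const, hslice, hslice, ← sub_mul]
    congr 1
    rcases le_total 0 (c i) with hc | hc <;> simp [hc]
  obtain ⟨t, ht⟩ : ∃ t, 0 < ∑ i, (slice (c i) t * d i - slice (-c i) t * d i) := by
    by_contra! hcon
    exact h.not_ge (hlayer ▸ integral_nonpos hcon)
  have ht0 : 0 ≤ t := by
    by_contra hneg
    simp [slice, Set.indicator_apply, hneg] at ht
  refine ⟨t, ht0, ?_⟩
  simpa [slice, Set.indicator_apply, ht0, sum_filter, lt_neg] using ht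

variable {V : Type*}

/-- The greatest response of an edge weighting to the vertex prices `c`: an edge is fully used
exactly when its endpoints have positive total price. -/
noncomputable def priceWeight (c : V → ℝ) : Sym2 V → ℝ :=
  Sym2.lift ⟨fun u v => if 0 < c u + c v then 1 else 0, fun u v => by simp only [add_comm]⟩

lemma priceWeight_mk (c : V → ℝ) (u v : V) :
    priceWeight c s(u, v) = if 0 < c u + c v then 1 else 0 := rfl

lemma priceWeight_mem_Icc (c : V → ℝ) : priceWeight c ∈ Set.Icc 0 1 := by
  constructor <;> intro e <;> induction e with | _ u v => ?_
  all_goals rw [priceWeight_mk]; split_ifs <;> simp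

variable [Fintype V]

/-- The fractional degree at each vertex of an edge weighting, as a linear map. -/
def fractionalDegree (G : SimpleGraph V) [DecidableRel G.Adj] : (Sym2 V → ℝ) →ₗ[ℝ] V → ℝ :=
  LinearMap.pi fun v => ∑ u ∈ G.neighborFinset v, LinearMap.proj s(v, u)

lemma fractionalDegree_apply (G : SimpleGraph V) [DecidableRel G.Adj] (h : Sym2 V → ℝ) (v : V) :
    fractionalDegree G h v = ∑ u ∈ G.neighborFinset v, h s(v, u) := by
  simp [fractionalDegree]

variable [DecidableEq V]

lemma sum_incidenceFinset_eq_sum_neighborFinset (G : SimpleGraph V) [DecidableRel G.Adj]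
    (h : Sym2 V → ℝ) (v : V) :
    ∑ e ∈ G.incidenceFinset v, h e = ∑ u ∈ G.neighborFinset v, h s(v, u) := by
  symm
  refine sum_bij (fun u _ => s(v, u)) (fun u hu => ?_) (fun u _ w _ => Sym2.congr_right.1)
    (fun e he => ?_) fun _ _ => rfl
  · simpa [SimpleGraph.mk'_mem_incidenceSet_iff] using hu
  · obtain ⟨he, hv⟩ := (SimpleGraph.mem_incidenceFinset G v e).1 he
    obtain ⟨u, rfl⟩ := Sym2.mem_iff_exists.1 hv
    exact ⟨u, by simpa using he, rfl⟩

lemma disjoint_fractionalDegree_image_Icc {G : SimpleGraph V} [DecidableRel G.Adj] {a b : ℕ}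
    (hG : ¬G.HasFractionalABFactor a b) :
    Disjoint (fractionalDegree G '' Set.Icc 0 1) (Set.Icc (fun _ => (a : ℝ)) fun _ => b) := by
  rw [Set.disjoint_left]
  rintro _ ⟨h, hh, rfl⟩ hdeg
  refine hG ⟨h, fun e _ => ⟨hh.1 e, hh.2 e⟩, fun v => ?_⟩
  have : (a : ℝ) ≤ fractionalDegree G h v ∧ fractionalDegree G h v ≤ b := ⟨hdeg.1 v, hdeg.2 v⟩
  rw [fractionalDegree_apply, ← sum_incidenceFinset_eq_sum_neighborFinset] at this
  convert this

lemma exists_linear_separation {G : SimpleGraph V} [DecidableRel G.Adj] {a b : ℕ}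
    (hG : ¬G.HasFractionalABFactor a b) :
    ∃ c : V → ℝ, ∀ h ∈ Set.Icc (0 : Sym2 V → ℝ) 1, ∀ p ∈ Set.Icc (fun _ => (a : ℝ)) fun _ => b,
      0 < ∑ v, c v * (p v - fractionalDegree G h v) := by
  obtain ⟨f, r, r', hf, hr, hf'⟩ := geometric_hahn_banach_compact_closed
    ((convex_Icc 0 1).linear_image (fractionalDegree G))
    (isCompact_Icc.image (fractionalDegree G).continuous_of_finiteDimensional)
    (convex_Icc _ _) isClosed_Icc (disjoint_fractionalDegree_image_Icc hG)
  refine ⟨fun v => f (Pi.single v 1), fun h hh p hp => ?_⟩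
  have hsum (z : V → ℝ) : ∑ v, f (Pi.single v 1) * z v = f z := by
    conv_rhs => rw [← univ_sum_single z, map_sum]
    refine sum_congr rfl fun v _ => ?_
    rw [mul_comm, ← smul_eq_mul, ← map_smul, ← Pi.single_smul, smul_eq_mul, mul_one]
  have := hf _ (Set.mem_image_of_mem _ hh)
  have := hf' p hp
  calc 0 < f (p - fractionalDegree G h) := by rw [map_sub]; linarith
    _ = _ := (hsum _).symm

lemma sum_fractionalDegree_priceWeight (G : SimpleGraph V) [DecidableRel G.Adj] {c : V → ℝ}
    {t : ℝ} {S T : Finset V} (hS : ∀ v, v ∈ S ↔ c v < -t) (hT : ∀ v, v ∈ T ↔ t < c v) :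
    ∑ v ∈ T, fractionalDegree G (priceWeight c) v - ∑ v ∈ S, fractionalDegree G (priceWeight c) v =
      ∑ v ∈ T, (#(G.neighborFinset v \ S) : ℝ) := by
  have hdegT : ∀ v ∈ T, fractionalDegree G (priceWeight c) v =
      ∑ u ∈ G.neighborFinset v ∩ S, priceWeight c s(v, u) + #(G.neighborFinset v \ S) := by
    intro v hv
    have hfull : ∀ u ∈ G.neighborFinset v \ S, priceWeight c s(v, u) = 1 := fun u hu => by
      have hu := mt (hS u).2 (mem_sdiff.1 hu).2
      exact if_pos (by linarith [(hT v).1 hv])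
    rw [fractionalDegree_apply, ← sum_inter_add_sum_sdiff _ S, sum_congr rfl hfull, sum_const,
      nsmul_one]
  have hdegS : ∀ v ∈ S, fractionalDegree G (priceWeight c) v =
      ∑ u ∈ G.neighborFinset v ∩ T, priceWeight c s(v, u) := by
    intro v hv
    rw [fractionalDegree_apply]
    refine (sum_subset inter_subset_left fun u hu hu' => if_neg ?_).symm
    have hu := mt (hT u).2 fun h => hu' (mem_inter.2 ⟨hu, h⟩)
    linarith [(hS v).1 hv]
  have hswap : ∑ v ∈ T, ∑ u ∈ G.neighborFinset v ∩ S, priceWeight c s(v, u) =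
      ∑ v ∈ S, ∑ u ∈ G.neighborFinset v ∩ T, priceWeight c s(v, u) := by
    rw [sum_comm' (t' := S) (s' := fun v => G.neighborFinset v ∩ T) fun u v => by
      simp [G.adj_comm u v, and_comm, and_left_comm]]
    exact sum_congr rfl fun v _ => sum_congr rfl fun u _ => by rw [Sym2.eq_swap]
  rw [sum_congr rfl hdegT, sum_congr rfl hdegS, sum_add_distrib, hswap, add_sub_cancel_left]

lemma exists_deficient_pair {G : SimpleGraph V} [DecidableRel G.Adj] {a b : ℕ} (hab : a ≤ b)
    (hG : ¬G.HasFractionalABFactor a b) :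
    ∃ S T : Finset V, Disjoint S T ∧
      ∑ v ∈ T, #(G.neighborFinset v \ S) + b * #S < a * #T := by
  obtain ⟨c, hc⟩ := exists_linear_separation hG
  let p (v : V) : ℝ := if 0 ≤ c v then a else b
  have hp : p ∈ Set.Icc (fun _ => (a : ℝ)) fun _ => b := by
    have : (a : ℝ) ≤ b := mod_cast hab
    constructor <;> intro v <;> dsimp only [p] <;> split_ifs <;> simp [this]
  obtain ⟨t, ht, hpos⟩ := exists_threshold_of_sum_mul_pos (hc _ (priceWeight_mem_Icc c) p hp)
  set T : Finset V := {v | t < c v}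
  set S : Finset V := {v | c v < -t}
  have hS (v : V) : v ∈ S ↔ c v < -t := mem_filter_univ v
  have hT (v : V) : v ∈ T ↔ t < c v := mem_filter_univ v
  have hpT : ∑ v ∈ T, p v = a * #T := by
    rw [sum_congr rfl fun v hv => if_pos (ht.trans ((hT v).1 hv).le), sum_const, nsmul_eq_mul,
      mul_comm]
  have hpS : ∑ v ∈ S, p v = b * #S := by
    rw [sum_congr rfl fun v hv => if_neg (by linarith [(hS v).1 hv]), sum_const, nsmul_eq_mul,
      mul_comm]
  refine ⟨S, T, disjoint_filter.2 fun v _ h h' => by linarith, ?_⟩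
  have hdeg := sum_fractionalDegree_priceWeight G hS hT
  rw [sum_sub_distrib, sum_sub_distrib, hpT, hpS] at hpos
  have : ∑ v ∈ T, (#(G.neighborFinset v \ S) : ℝ) + b * #S < a * #T := by linarith
  exact_mod_cast this

end Criterion

section DeficientCounting

lemma quadratic_le_of_mem_Icc {α β γ p q t M : ℝ} (hα : 0 ≤ α) (ht : t ∈ Set.Icc p q)
    (hp : α * p ^ 2 + β * p + γ ≤ M) (hq : α * q ^ 2 + β * q + γ ≤ M) :
    α * t ^ 2 + β * t + γ ≤ M := by
  rcases le_total (α * (t + p) + β) 0 with hslope | hslope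
  · have := mul_nonneg (sub_nonneg.2 ht.1) (neg_nonneg.2 hslope)
    linarith
  · have hslope' : 0 ≤ α * (t + q) + β :=
      hslope.trans (by have := ht.1.trans ht.2; gcongr)
    have := mul_nonneg (sub_nonneg.2 ht.2) hslope'
    linarith

section Numerics

variable {a b n s t : ℝ}

lemma degree_sum_bound_lt_of_le_half (ha : 1 ≤ a) (hab : a + 1 ≤ b)
    (hn : 2 * (a + b + 2) * (b + 2) ≤ n) (hbs : b * s ≤ a * t) (ht : b + 2 ≤ t)
    (htn : t ≤ n / 2) :
    (n - t) * (n - t - 1) + 2 * (a * t + s * t - b * s - 1) < (n - b - 2) ^ 2 := by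
  have hb : 0 < b := by linarith
  obtain ⟨r, rfl⟩ : ∃ r, a = r * b := ⟨a / b, by field_simp⟩
  have hr0 : 0 < r := pos_of_mul_pos_left (by linarith) hb.le
  have hr1 : r < 1 := by nlinarith
  have hsr : s ≤ r * t := le_of_mul_le_mul_left (by linarith) hb
  have hquad : r * b * t + s * t - b * s ≤ r * t ^ 2 := by
    nlinarith [mul_nonneg (sub_nonneg.2 hsr) (by linarith : 0 ≤ t - b)]
  have hleft : (1 + 2 * r) * (b + 2) ^ 2 + (1 - 2 * n) * (b + 2) + (n ^ 2 - n) ≤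
      (n - b - 2) ^ 2 := by
    have : (b + 2) * (2 * r * (b + 2)) ≤ (b + 2) * (2 * (r * b + 2)) := by
      rw [mul_assoc 2 r]
      gcongr
      linarith
    nlinarith
  have hright : (1 + 2 * r) * (n / 2) ^ 2 + (1 - 2 * n) * (n / 2) + (n ^ 2 - n) ≤
      (n - b - 2) ^ 2 := by
    have : 10 * (b + 2) ≤ n := by nlinarith
    nlinarith [mul_nonneg (sub_nonneg.2 hr1.le) (sq_nonneg n)]
  have := quadratic_le_of_mem_Icc (by positivity) ⟨ht, htn⟩ hleft hright
  linarith

lemma degree_sum_bound_lt_of_half_le (ha : 1 ≤ a) (hab : a + 1 ≤ b)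
    (hn : 2 * (a + b + 2) * (b + 2) ≤ n) (hst : s + t ≤ n) (htn : n / 2 ≤ t) (hs : 0 ≤ s) :
    (n - t) * (n - t - 1) + 2 * (a * t + s * t - b * s - 1) < (n - b - 2) ^ 2 := by
  have hn10 : 10 * (b + 2) ≤ n := by nlinarith
  have hs_le : s * (t - b) ≤ (n - t) * (t - b) := by gcongr <;> linarith
  have htail : 0 ≤ (n - t) * b := mul_nonneg (by linarith) (by linarith)
  have hprod : n / 2 * (n / 2 - 2 * a) ≤ t * (t - 2 * a) := by gcongr <;> linarith
  nlinarith

end Numerics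

variable {V : Type*} [Fintype V] [DecidableEq V] {G : SimpleGraph V} [DecidableRel G.Adj] {a b : ℕ}

lemma exists_sum_degree_lt (hab : a ≤ b) (hG : ¬G.HasFractionalABFactor a b) :
    ∃ (T : Finset V) (s : ℕ), s + #T ≤ Fintype.card V ∧ b * s < a * #T ∧
      ∑ v ∈ T, G.degree v + b * s < a * #T + s * #T := by
  obtain ⟨S, T, hST, hdef⟩ := exists_deficient_pair hab hG
  refine ⟨T, #S, ?_, by lia, ?_⟩
  · rw [← card_union_of_disjoint hST]
    exact card_le_univ _
  · have hdeg : ∑ v ∈ T, G.degree v ≤ ∑ v ∈ T, (#(G.neighborFinset v \ S) + #S) :=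
      sum_le_sum fun v _ => by
        rw [← G.card_neighborFinset_eq_degree]
        exact card_le_card_sdiff_add_card
    rw [sum_add_distrib, sum_const, smul_eq_mul] at hdeg
    lia

lemma card_le_succ_of_sum_degree_lt (ha : 0 < a) (hab : a < b)
    (hn : 2 * (a + b + 2) * (b + 2) ≤ Fintype.card V)
    (hρ : (Fintype.card V : ℝ) - b - 2 ≤ G.spectralRadius) {T : Finset V} {s : ℕ}
    (hst : s + #T ≤ Fintype.card V) (hbs : b * s < a * #T)
    (hdeg : ∑ v ∈ T, G.degree v + b * s < a * #T + s * #T) : #T ≤ b + 1 := by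
  by_contra! hlt
  have : Nonempty V := Fintype.card_pos_iff.1 (by lia)
  have hbound : ((Fintype.card V : ℝ) - #T) * (Fintype.card V - #T - 1) +
      2 * (a * #T + s * #T - b * s - 1) < (Fintype.card V - b - 2) ^ 2 := by
    rcases le_total (#T : ℝ) (Fintype.card V / 2) with hhalf | hhalf
    · exact degree_sum_bound_lt_of_le_half (mod_cast ha) (mod_cast hab) (mod_cast hn)
        (mod_cast hbs.le) (mod_cast hlt) hhalf
    · exact degree_sum_bound_lt_of_half_le (mod_cast ha) (mod_cast hab) (mod_cast hn)
        (mod_cast hst) hhalf (by positivity)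
  have hdeg' : ∑ v ∈ T, (G.degree v : ℝ) + b * s + 1 ≤ a * #T + s * #T := mod_cast hdeg
  have hcompl : (#Tᶜ : ℝ) = Fintype.card V - #T := by
    rw [card_compl, Nat.cast_sub (card_le_univ T)]
  have hsum := (spectralRadius_sq_le_sum_degree G).trans (sum_degree_le_of_compl G T)
  rw [hcompl] at hsum
  have hb : (b : ℝ) + 2 ≤ Fintype.card V := mod_cast hlt.trans_le (card_le_univ T)
  have hsq := pow_le_pow_left₀ (by linarith) hρ 2
  linarith

lemma exists_card_eq_and_sum_degree_lt (ha : 0 < a) (hab : a < b)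
    (hn : 2 * (a + b + 2) * (b + 2) ≤ Fintype.card V) (hδ : ∀ v, a ≤ G.degree v)
    (hρ : (Fintype.card V : ℝ) - b - 2 ≤ G.spectralRadius)
    (hG : ¬G.HasFractionalABFactor a b) :
    ∃ T : Finset V, #T = b + 1 ∧ ∑ v ∈ T, G.degree v < a * (#T + 1) := by
  obtain ⟨T, s, hst, hbs, hdeg⟩ := exists_sum_degree_lt hab.le hG
  have hT_gt : b < #T := by
    have hδT : #T * a ≤ ∑ v ∈ T, G.degree v := by
      simpa using card_nsmul_le_sum T _ a fun v _ => hδ v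
    by_contra! hle
    have := Nat.mul_le_mul_left s hle
    lia
  have hT : #T = b + 1 :=
    (card_le_succ_of_sum_degree_lt ha hab hn hρ hst hbs hdeg).antisymm hT_gt
  have hsa : s ≤ a := by
    rw [hT] at hbs
    by_contra! hlt
    nlinarith
  refine ⟨T, hT, ?_⟩
  rw [hT] at hdeg ⊢
  nlinarith

end DeficientCounting

/-! ### The profile of a Perron vector -/

section Profile

variable {V : Type*} [Fintype V] [DecidableEq V] {G : SimpleGraph V} [DecidableRel G.Adj]
  {T : Finset V} {x : V → ℝ}

namespace IsPerronVector

lemma apply_le_norm (hx : IsPerronVector G x) (v : V) : x v ≤ ‖x‖ := by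
  simpa [abs_of_nonneg (hx.nonneg v)] using norm_le_pi_norm x v

lemma norm_pos (hx : IsPerronVector G x) : 0 < ‖x‖ := norm_pos_iff.2 hx.ne_zero

lemma exists_apply_eq_norm (hx : IsPerronVector G x) : ∃ v, x v = ‖x‖ := by
  by_contra! hne
  have hlt : ‖x‖ < ‖x‖ := (pi_norm_lt_iff hx.norm_pos).2 fun v => by
    rw [Real.norm_of_nonneg (hx.nonneg v)]
    exact (hx.apply_le_norm v).lt_of_ne (hne v)
  exact hlt.false

lemma spectralRadius_mul_apply_le (hx : IsPerronVector G x) (v : V) :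
    G.spectralRadius * x v ≤ G.degree v * ‖x‖ := by
  rw [← hx.sum_neighborFinset, ← G.card_neighborFinset_eq_degree, ← nsmul_eq_mul]
  exact sum_le_card_nsmul _ _ _ fun u _ => hx.apply_le_norm u

lemma spectralRadius_add_one_mul_apply (hx : IsPerronVector G x)
    (hG : G.IsClique (T : Set V)ᶜ) {w : V} (hw : w ∉ T) :
    (G.spectralRadius + 1) * x w = ∑ u ∈ Tᶜ, x u + ∑ v ∈ T with G.Adj w v, x v := by
  have hN : G.neighborFinset w = Tᶜ.erase w ∪ {v ∈ T | G.Adj w v} := by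
    ext u
    simp only [SimpleGraph.mem_neighborFinset, mem_union, mem_erase, mem_compl, mem_filter]
    refine ⟨fun h => ?_, ?_⟩
    · by_cases hu : u ∈ T
      exacts [.inr ⟨hu, h⟩, .inl ⟨h.ne', hu⟩]
    · rintro (⟨hne, hu⟩ | ⟨-, h⟩)
      exacts [hG (by simpa using hw) (by simpa using hu) hne.symm, h]
  have hdisj : Disjoint (Tᶜ.erase w) {v ∈ T | G.Adj w v} :=
    disjoint_left.2 fun u hu hu' => (mem_compl.1 (mem_of_mem_erase hu)) (mem_of_mem_filter u hu')
  rw [add_one_mul, ← hx.sum_neighborFinset, hN, sum_union hdisj,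
    ← sum_erase_add _ _ (mem_compl.2 hw)]
  ring

lemma apply_le_norm_div_four (hx : IsPerronVector G x) (hρ : 0 < G.spectralRadius) {v : V}
    (hv : 4 * (G.degree v : ℝ) ≤ G.spectralRadius) : x v ≤ ‖x‖ / 4 := by
  refine le_of_mul_le_mul_left ?_ hρ
  have := mul_le_mul_of_nonneg_right hv (norm_nonneg x)
  linarith [hx.spectralRadius_mul_apply_le v]

lemma norm_mul_le_apply_of_isClique (hx : IsPerronVector G x) (hG : G.IsClique (T : Set V)ᶜ)
    (hlow : ∀ v ∈ T, x v < ‖x‖) (hρ : 0 < G.spectralRadius)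
    (hT : 5 * (#T : ℝ) ≤ G.spectralRadius + 1) {w : V} (hw : w ∉ T) : 4 / 5 * ‖x‖ ≤ x w := by
  obtain ⟨w₀, hw₀⟩ := hx.exists_apply_eq_norm
  have hw₀T : w₀ ∉ T := fun h => (hlow w₀ h).ne hw₀
  have hmax := hx.spectralRadius_add_one_mul_apply hG hw₀T
  have htail : ∑ v ∈ T with G.Adj w₀ v, x v ≤ #T * ‖x‖ := calc
    _ ≤ ∑ v ∈ T, x v := sum_le_sum_of_subset_of_nonneg (filter_subset _ _) fun v _ _ => hx.nonneg v
    _ ≤ #T * ‖x‖ := by simpa using sum_le_card_nsmul T x _ fun v _ => hx.apply_le_norm v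
  have hw_eq := hx.spectralRadius_add_one_mul_apply hG hw
  have hnonneg : 0 ≤ ∑ v ∈ T with G.Adj w v, x v := sum_nonneg fun v _ => hx.nonneg v
  have hT' := mul_le_mul_of_nonneg_right hT (norm_nonneg x)
  rw [hw₀] at hmax
  refine le_of_mul_le_mul_left ?_ (by linarith : 0 < G.spectralRadius + 1)
  linarith

end IsPerronVector

/-- `G` is complete off the set `T`, the vertices of `T` have degree at least `a` with a total
excess of less than `a`, and `ρ(G)` is large: the situation in which the Perron vector of `G` is
nearly constant off `T` and small on `T`. -/
structure IsSparseSet (G : SimpleGraph V) [DecidableRel G.Adj] (a : ℕ) (T : Finset V) : Prop where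
  isClique_compl : G.IsClique (T : Set V)ᶜ
  le_degree : ∀ v ∈ T, a ≤ G.degree v
  sum_degree_lt : ∑ v ∈ T, G.degree v < a * (#T + 1)
  le_spectralRadius : 8 * (a : ℝ) + 5 * #T ≤ G.spectralRadius

namespace IsSparseSet

variable {a : ℕ}

lemma pos (hT : IsSparseSet G a T) : 0 < a :=
  pos_of_mul_pos_left (hT.sum_degree_lt.pos) (Nat.zero_le _)

lemma spectralRadius_pos (hT : IsSparseSet G a T) : 0 < G.spectralRadius := by
  have : (0 : ℝ) < a := mod_cast hT.pos
  exact lt_of_lt_of_le (by positivity) hT.le_spectralRadius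

lemma degree_lt (hT : IsSparseSet G a T) {v : V} (hv : v ∈ T) : G.degree v < 2 * a := by
  have hrest := card_nsmul_le_sum (T.erase v) (fun u => G.degree u) a fun u hu =>
    hT.le_degree u (mem_of_mem_erase hu)
  have hsum := hT.sum_degree_lt
  rw [← add_sum_erase T _ hv, ← card_erase_add_one hv] at hsum
  rw [smul_eq_mul] at hrest
  lia

lemma apply_le (hT : IsSparseSet G a T) (hx : IsPerronVector G x) {v : V} (hv : v ∈ T) :
    x v ≤ ‖x‖ / 4 := by
  refine hx.apply_le_norm_div_four hT.spectralRadius_pos ?_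
  have hdeg : (G.degree v : ℝ) ≤ 2 * a := mod_cast (hT.degree_lt hv).le
  have : (0 : ℝ) ≤ 5 * #T := by positivity
  linarith [hT.le_spectralRadius]

lemma le_apply (hT : IsSparseSet G a T) (hx : IsPerronVector G x) {w : V} (hw : w ∉ T) :
    4 / 5 * ‖x‖ ≤ x w := by
  refine hx.norm_mul_le_apply_of_isClique hT.isClique_compl
    (fun v hv => (hT.apply_le hx hv).trans_lt (by linarith [hx.norm_pos])) hT.spectralRadius_pos
    ?_ hw
  have : (0 : ℝ) ≤ 8 * a := by positivity
  linarith [hT.le_spectralRadius]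

lemma apply_lt_apply (hT : IsSparseSet G a T) (hx : IsPerronVector G x) {v w : V} (hv : v ∈ T)
    (hw : w ∉ T) : x v < x w := by
  linarith [hT.apply_le hx hv, hT.le_apply hx hw, hx.norm_pos]

end IsSparseSet

end Profile

/-! ### Top sets -/

section TopSet

variable {V : Type*} {B N : Finset V} {q : V → ℝ}

/-- `B` consists of vertices carrying the largest values of `q`; ties are allowed. -/
def IsTopSet (q : V → ℝ) (B : Finset V) : Prop := ∀ u ∈ B, ∀ w ∉ B, q w ≤ q u

/-- `B` consists of the vertices carrying the largest values of `q`, without ties across the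
boundary of `B`. -/
def IsStrictTopSet (q : V → ℝ) (B : Finset V) : Prop := ∀ u ∈ B, ∀ w ∉ B, q w < q u

lemma IsStrictTopSet.isTopSet (hB : IsStrictTopSet q B) : IsTopSet q B :=
  fun u hu w hw => (hB u hu w hw).le

lemma sum_le_sum_add_card_sub_card_mul {t : ℝ} (hB : ∀ u ∈ B, t ≤ q u) (hBc : ∀ u ∉ B, q u ≤ t) :
    ∑ u ∈ N, q u ≤ ∑ u ∈ B, q u + ((#N : ℝ) - #B) * t := by
  classical
  have hN := sum_inter_add_sum_sdiff N B q
  have hB' := sum_inter_add_sum_sdiff B N q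
  have hNcard : (#(N ∩ B) : ℝ) + #(N \ B) = #N := mod_cast card_inter_add_card_sdiff N B
  have hBcard : (#(B ∩ N) : ℝ) + #(B \ N) = #B := mod_cast card_inter_add_card_sdiff B N
  have hout := sum_le_card_nsmul (N \ B) q t fun u hu => hBc u (mem_sdiff.1 hu).2
  have hin := card_nsmul_le_sum (B \ N) q t fun u hu => hB u (mem_sdiff.1 hu).1
  rw [inter_comm] at hB' hBcard
  rw [nsmul_eq_mul] at hout hin
  rw [← hNcard, ← hBcard]
  linarith

lemma IsTopSet.sum_le_sum (hB : IsTopSet q B) (hcard : #N = #B) : ∑ u ∈ N, q u ≤ ∑ u ∈ B, q u := by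
  obtain rfl | hne := B.eq_empty_or_nonempty
  · rw [card_empty, card_eq_zero] at hcard
    rw [hcard]
  · obtain ⟨u₀, hu₀, hmin⟩ := exists_min_image B q hne
    simpa [hcard] using sum_le_sum_add_card_sub_card_mul (N := N) hmin (hB u₀ hu₀)

lemma IsStrictTopSet.eq_of_sum_le (hB : IsStrictTopSet q B) (hcard : #N = #B)
    (hsum : ∑ u ∈ B, q u ≤ ∑ u ∈ N, q u) : N = B := by
  classical
  by_contra hNB
  have hsub : ¬B ⊆ N := fun h => hNB (eq_of_subset_of_card_le h hcard.le).symm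
  obtain ⟨u, hu, huN⟩ := not_subset.1 hsub
  obtain ⟨w, hw, hwB⟩ := not_subset.1 fun h => hNB (eq_of_subset_of_card_le h hcard.ge)
  -- Exchanging `w` for `u` gives a set of the same size and strictly larger sum.
  have hexchange := hB.isTopSet.sum_le_sum (N := insert u (N.erase w)) (by
    rw [card_insert_of_notMem (by simp [huN]), card_erase_add_one hw, hcard])
  rw [sum_insert (by simp [huN])] at hexchange
  linarith [hB u hu w hwB, add_sum_erase N q hw]

end TopSet

/-! ### The extremal configuration -/

section Extremal

variable {V : Type*} [Fintype V]

/-- The structure of `H_n^{a,b}`: a complete graph off `T`, in which every vertex of `T` other than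
the centre `v₀` has neighbourhood `B₁` of size `a`, and `v₀` has neighbourhood `B₂ ⊇ B₁` of size
`2 * a - 1`. -/
structure IsExtremal (H : SimpleGraph V) [DecidableRel H.Adj] (a : ℕ) (T B₁ B₂ : Finset V)
    (v₀ : V) : Prop where
  isClique_compl : H.IsClique (T : Set V)ᶜ
  center_mem : v₀ ∈ T
  subset : B₁ ⊆ B₂
  disjoint : Disjoint B₂ T
  card_inner : #B₁ = a
  card_outer : #B₂ + 1 = 2 * a
  neighborFinset_of_ne : ∀ v ∈ T, v ≠ v₀ → H.neighborFinset v = B₁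
  neighborFinset_center : H.neighborFinset v₀ = B₂

namespace IsExtremal

variable {H : SimpleGraph V} [DecidableRel H.Adj] {a : ℕ} {T B₁ B₂ : Finset V} {v₀ v w : V}
  {y : V → ℝ}

lemma notMem_of_mem_outer (hH : IsExtremal H a T B₁ B₂ v₀) (hw : w ∈ B₂) : w ∉ T :=
  disjoint_left.1 hH.disjoint hw

lemma inner_subset_neighborFinset (hH : IsExtremal H a T B₁ B₂ v₀) (hv : v ∈ T) :
    B₁ ⊆ H.neighborFinset v := by
  obtain rfl | hne := eq_or_ne v v₀
  · exact hH.neighborFinset_center ▸ hH.subset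
  · exact (hH.neighborFinset_of_ne v hv hne).ge

lemma neighborFinset_subset_outer (hH : IsExtremal H a T B₁ B₂ v₀) (hv : v ∈ T) :
    H.neighborFinset v ⊆ B₂ := by
  obtain rfl | hne := eq_or_ne v v₀
  · exact hH.neighborFinset_center.le
  · exact hH.neighborFinset_of_ne v hv hne ▸ hH.subset

lemma isIndepSet (hH : IsExtremal H a T B₁ B₂ v₀) : H.IsIndepSet T := fun v hv w hw _ hadj =>
  hH.notMem_of_mem_outer
    (hH.neighborFinset_subset_outer hv ((H.mem_neighborFinset v w).2 hadj)) hw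

lemma inner_nonempty (hH : IsExtremal H a T B₁ B₂ v₀) : B₁.Nonempty := by
  rw [← card_pos]
  have := hH.card_inner
  have := hH.card_outer
  lia

lemma neighborFinset_nonempty (hH : IsExtremal H a T B₁ B₂ v₀) (hv : v ∈ T) :
    (H.neighborFinset v).Nonempty :=
  hH.inner_nonempty.mono (hH.inner_subset_neighborFinset hv)

lemma preconnected (hH : IsExtremal H a T B₁ B₂ v₀) : H.Preconnected := by
  obtain ⟨c, hc⟩ := hH.inner_nonempty
  have hreach (v : V) : H.Reachable v c := by
    by_cases hv : v ∈ T
    · exact ((H.mem_neighborFinset v c).1 (hH.inner_subset_neighborFinset hv hc)).reachable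
    obtain rfl | hvc := eq_or_ne v c
    · rfl
    · exact (hH.isClique_compl (by simpa using hv)
        (by simpa using hH.notMem_of_mem_outer (hH.subset hc)) hvc).reachable
  exact fun v w => (hreach v).trans (hreach w).symm

lemma degree_of_ne (hH : IsExtremal H a T B₁ B₂ v₀) (hv : v ∈ T) (hne : v ≠ v₀) :
    H.degree v = a := by
  rw [← H.card_neighborFinset_eq_degree, hH.neighborFinset_of_ne v hv hne, hH.card_inner]

lemma degree_center (hH : IsExtremal H a T B₁ B₂ v₀) : H.degree v₀ + 1 = 2 * a := by
  rw [← H.card_neighborFinset_eq_degree, hH.neighborFinset_center, hH.card_outer]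

lemma sum_degree (hH : IsExtremal H a T B₁ B₂ v₀) : ∑ v ∈ T, H.degree v + 1 = a * (#T + 1) := by
  classical
  have hrest : ∑ v ∈ T.erase v₀, H.degree v = #(T.erase v₀) * a :=
    sum_const_nat fun v hv => hH.degree_of_ne (mem_of_mem_erase hv) (ne_of_mem_erase hv)
  rw [← add_sum_erase T _ hH.center_mem, hrest, ← card_erase_add_one hH.center_mem]
  linarith [hH.degree_center]

variable [DecidableEq V]

lemma isSparseSet (hH : IsExtremal H a T B₁ B₂ v₀)
    (hρ : 8 * (a : ℝ) + 5 * #T ≤ H.spectralRadius) : IsSparseSet H a T where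
  isClique_compl := hH.isClique_compl
  le_degree v hv := by
    rw [← H.card_neighborFinset_eq_degree, ← hH.card_inner]
    exact card_le_card (hH.inner_subset_neighborFinset hv)
  sum_degree_lt := by linarith [hH.sum_degree]
  le_spectralRadius := hρ

lemma apply_le_center (hH : IsExtremal H a T B₁ B₂ v₀) (hρ : 0 < H.spectralRadius)
    (hy : IsPerronVector H y) (hv : v ∈ T) : y v ≤ y v₀ := by
  refine le_of_mul_le_mul_left ?_ hρ
  rw [← hy.sum_neighborFinset, ← hy.sum_neighborFinset, hH.neighborFinset_center]
  exact sum_le_sum_of_subset_of_nonneg (hH.neighborFinset_subset_outer hv) fun u _ _ => hy.nonneg u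

lemma le_mul_apply_of_mem_outer (hH : IsExtremal H a T B₁ B₂ v₀) (hy : IsPerronVector H y)
    (hw : w ∈ B₂) : ∑ u ∈ Tᶜ, y u + y v₀ ≤ (H.spectralRadius + 1) * y w := by
  rw [hy.spectralRadius_add_one_mul_apply hH.isClique_compl (hH.notMem_of_mem_outer hw)]
  gcongr
  rw [← hH.neighborFinset_center, SimpleGraph.mem_neighborFinset] at hw
  exact single_le_sum (fun v _ => hy.nonneg v) (mem_filter.2 ⟨hH.center_mem, hw.symm⟩)

lemma lt_mul_apply_of_mem_inner (hH : IsExtremal H a T B₁ B₂ v₀) (hy : IsPerronVector H y)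
    (hv : v ∈ T) (hne : v ≠ v₀) (hw : w ∈ B₁) :
    ∑ u ∈ Tᶜ, y u + y v₀ < (H.spectralRadius + 1) * y w := by
  rw [hy.spectralRadius_add_one_mul_apply hH.isClique_compl
    (hH.notMem_of_mem_outer (hH.subset hw))]
  have hadj (u : V) (hu : u ∈ T) : u ∈ T.filter (H.Adj w) := mem_filter.2
    ⟨hu, ((H.mem_neighborFinset u w).1 (hH.inner_subset_neighborFinset hu hw)).symm⟩
  gcongr
  exact single_lt_sum hne (hadj v₀ hH.center_mem) (hadj v hv) (hy.pos hH.preconnected v)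
    fun u _ _ => hy.nonneg u

lemma mul_apply_le_of_notMem_inner (hH : IsExtremal H a T B₁ B₂ v₀) (hρ : 0 < H.spectralRadius)
    (hy : IsPerronVector H y) (hw : w ∉ B₁) :
    (H.spectralRadius + 1) * y w ≤ ∑ u ∈ Tᶜ, y u + y v₀ := by
  by_cases hwT : w ∈ T
  · rw [add_one_mul, ← hy.sum_neighborFinset]
    refine add_le_add (sum_le_sum_of_subset_of_nonneg (fun u hu => mem_compl.2 ?_)
      fun u _ _ => hy.nonneg u) (hH.apply_le_center hρ hy hwT)
    exact hH.notMem_of_mem_outer (hH.neighborFinset_subset_outer hwT hu)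
  · rw [hy.spectralRadius_add_one_mul_apply hH.isClique_compl hwT]
    gcongr
    have hsub : T.filter (H.Adj w) ⊆ {v₀} := fun v hv => by
      obtain ⟨hvT, hwv⟩ := mem_filter.1 hv
      by_contra hne
      have hN := hH.neighborFinset_of_ne v hvT (by simpa using hne)
      exact hw (hN ▸ (H.mem_neighborFinset v w).2 hwv.symm)
    simpa using sum_le_sum_of_subset_of_nonneg hsub fun v _ _ => hy.nonneg v

lemma mul_apply_lt_of_notMem_outer (hH : IsExtremal H a T B₁ B₂ v₀) (hy : IsPerronVector H y)
    (hw : w ∉ B₂) (hwT : w ∉ T) : (H.spectralRadius + 1) * y w < ∑ u ∈ Tᶜ, y u + y v₀ := by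
  have hempty : T.filter (H.Adj w) = ∅ := filter_eq_empty_iff.2 fun v hv hwv =>
    hw (hH.neighborFinset_subset_outer hv ((H.mem_neighborFinset v w).2 hwv.symm))
  rw [hy.spectralRadius_add_one_mul_apply hH.isClique_compl hwT, hempty, sum_empty]
  gcongr
  exact hy.pos hH.preconnected v₀

lemma exists_threshold (hH : IsExtremal H a T B₁ B₂ v₀) (hρ : 0 < H.spectralRadius)
    (hy : IsPerronVector H y) :
    ∃ t, 0 ≤ t ∧ (∀ u ∈ B₂, t ≤ y u) ∧ ∀ w ∉ B₁, y w ≤ t := by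
  have hρ' : 0 < H.spectralRadius + 1 := by linarith
  refine ⟨(∑ u ∈ Tᶜ, y u + y v₀) / (H.spectralRadius + 1), ?_, fun u hu => ?_, fun w hw => ?_⟩
  · exact div_nonneg (add_nonneg (sum_nonneg fun u _ => hy.nonneg u) (hy.nonneg v₀)) hρ'.le
  · exact (div_le_iff₀' hρ').2 (hH.le_mul_apply_of_mem_outer hy hu)
  · exact (le_div_iff₀' hρ').2 (hH.mul_apply_le_of_notMem_inner hρ hy hw)

lemma isStrictTopSet_neighborFinset (hH : IsExtremal H a T B₁ B₂ v₀) (hT : IsSparseSet H a T)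
    (hy : IsPerronVector H y) (hv : v ∈ T) : IsStrictTopSet y (H.neighborFinset v) := by
  intro u hu w hw
  have hρ := hT.spectralRadius_pos
  by_cases hwT : w ∈ T
  · exact hT.apply_lt_apply hy hwT
      (hH.notMem_of_mem_outer (hH.neighborFinset_subset_outer hv hu))
  refine lt_of_mul_lt_mul_left ?_ (by linarith : 0 ≤ H.spectralRadius + 1)
  obtain rfl | hne := eq_or_ne v v₀
  · rw [hH.neighborFinset_center] at hu hw
    exact (hH.mul_apply_lt_of_notMem_outer hy hw hwT).trans_le (hH.le_mul_apply_of_mem_outer hy hu)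
  · rw [hH.neighborFinset_of_ne v hv hne] at hu hw
    exact (hH.mul_apply_le_of_notMem_inner hρ hy hw).trans_lt
      (hH.lt_mul_apply_of_mem_inner hy hv hne hu)

lemma apply_le_three_quarters_center (hH : IsExtremal H a T B₁ B₂ v₀) (hT : IsSparseSet H a T)
    (hy : IsPerronVector H y) (ha : 2 ≤ a) (hv : v ∈ T) (hne : v ≠ v₀) :
    y v ≤ 3 / 4 * y v₀ := by
  refine le_of_mul_le_mul_left ?_ hT.spectralRadius_pos
  have hv_eq := hy.sum_neighborFinset v
  have hv₀_eq := hy.sum_neighborFinset v₀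
  rw [hH.neighborFinset_of_ne v hv hne] at hv_eq
  rw [hH.neighborFinset_center, ← sum_sdiff hH.subset] at hv₀_eq
  have hinner : ∑ u ∈ B₁, y u ≤ a * ‖y‖ := by
    simpa [hH.card_inner] using sum_le_card_nsmul B₁ y _ fun u _ => hy.apply_le_norm u
  have houter : ((a : ℝ) - 1) * (4 / 5 * ‖y‖) ≤ ∑ u ∈ B₂ \ B₁, y u := by
    have hcard : #(B₂ \ B₁) + 1 = a := by
      have := card_sdiff_add_card_eq_card hH.subset
      have := hH.card_inner
      have := hH.card_outer
      lia
    rw [← hcard, Nat.cast_add_one, add_sub_cancel_right, ← nsmul_eq_mul]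
    exact card_nsmul_le_sum _ _ _ fun u hu =>
      hT.le_apply hy (hH.notMem_of_mem_outer (mem_sdiff.1 hu).1)
  have ha' : (2 : ℝ) * ‖y‖ ≤ a * ‖y‖ :=
    mul_le_mul_of_nonneg_right (mod_cast ha) (norm_nonneg y)
  linarith [norm_nonneg y]

end IsExtremal

end Extremal

/-! ### Comparison with the extremal configuration -/

section Comparison

variable {V : Type*} [Fintype V] {H K : SimpleGraph V} [DecidableRel H.Adj] [DecidableRel K.Adj]
  {a : ℕ} {T B₁ B₂ : Finset V} {v₀ v : V} {x y : V → ℝ}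

lemma starWeight_le_add_mul {s t : ℝ} (hxv : 0 ≤ x v) (hyv : 0 ≤ y v)
    (hs : ∀ u ∈ H.neighborFinset v, s ≤ x u) (hs' : ∀ u ∉ H.neighborFinset v, x u ≤ s)
    (ht : ∀ u ∈ H.neighborFinset v, t ≤ y u) (ht' : ∀ u ∉ H.neighborFinset v, y u ≤ t) :
    starWeight K x y v ≤
      starWeight H x y v + ((K.degree v : ℝ) - H.degree v) * (y v * s + x v * t) := by
  have hsum_x := mul_le_mul_of_nonneg_left
    (sum_le_sum_add_card_sub_card_mul (N := K.neighborFinset v) hs hs') hyv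
  have hsum_y := mul_le_mul_of_nonneg_left
    (sum_le_sum_add_card_sub_card_mul (N := K.neighborFinset v) ht ht') hxv
  simp only [SimpleGraph.card_neighborFinset_eq_degree] at hsum_x hsum_y
  rw [starWeight, starWeight]
  linarith

variable [DecidableEq V]

namespace IsExtremal

lemma exists_starWeight_le (hH : IsExtremal H a T B₁ B₂ v₀) (hρ : 0 < H.spectralRadius)
    (hK : IsSparseSet K a T) (hx : IsPerronVector K x) (hy : IsPerronVector H y)
    (htop : ∀ v ∈ T, IsTopSet x (H.neighborFinset v)) :
    ∃ t, 0 ≤ t ∧ ∀ v ∈ T, ∃ s, 4 / 5 * ‖x‖ ≤ s ∧ s ≤ ‖x‖ ∧ starWeight K x y v ≤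
      starWeight H x y v + ((K.degree v : ℝ) - H.degree v) * (y v * s + x v * t) := by
  obtain ⟨t, ht₀, ht, ht'⟩ := hH.exists_threshold hρ hy
  refine ⟨t, ht₀, fun v hv => ?_⟩
  have hsub := hH.neighborFinset_subset_outer hv
  obtain ⟨u₀, hu₀, hmin⟩ := exists_min_image _ x (hH.neighborFinset_nonempty hv)
  exact ⟨x u₀, hK.le_apply hx (hH.notMem_of_mem_outer (hsub hu₀)), hx.apply_le_norm u₀,
    starWeight_le_add_mul (hx.nonneg v) (hy.nonneg v) hmin (htop v hv u₀ hu₀)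
      (fun u hu => ht u (hsub hu)) fun u hu => ht' u fun h =>
        hu (hH.inner_subset_neighborFinset hv h)⟩

lemma degree_le_degree_of_ne (hH : IsExtremal H a T B₁ B₂ v₀) (hK : IsSparseSet K a T) (hv : v ∈ T)
    (hne : v ≠ v₀) : H.degree v ≤ K.degree v :=
  (hH.degree_of_ne hv hne).trans_le (hK.le_degree v hv)

lemma degree_center_le_degree_center (hH : IsExtremal H a T B₁ B₂ v₀) (hK : IsSparseSet K a T) :
    K.degree v₀ ≤ H.degree v₀ := by
  have := hK.degree_lt hH.center_mem
  have := hH.degree_center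
  lia

-- An edge of `K` at a non-central vertex of `T` carries `y`-value at most `3 / 4 * y v₀`, whereas
-- an edge of `H` at `v₀` ends in an `x`-value of at least `4 / 5 * ‖x‖`; the gap is `1 / 20`.
lemma exists_starWeight_le_of_two_le (hH : IsExtremal H a T B₁ B₂ v₀) (hHT : IsSparseSet H a T)
    (hK : IsSparseSet K a T) (hx : IsPerronVector K x) (hy : IsPerronVector H y)
    (htop : ∀ v ∈ T, IsTopSet x (H.neighborFinset v)) (hcenter : ∀ v ∈ T, x v ≤ x v₀)
    (ha : 2 ≤ a) :
    ∃ c : ℝ, 0 ≤ c ∧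
      (∀ v ∈ T, v ≠ v₀ → starWeight K x y v ≤
        starWeight H x y v + ((K.degree v : ℝ) - H.degree v) * c) ∧
      starWeight K x y v₀ ≤ starWeight H x y v₀ +
        ((K.degree v₀ : ℝ) - H.degree v₀) * (c + y v₀ * ‖x‖ / 20) := by
  obtain ⟨t, ht₀, hstar⟩ := hH.exists_starWeight_le hHT.spectralRadius_pos hK hx hy htop
  have hy₀ : 0 ≤ y v₀ := hy.nonneg v₀
  have hx₀ : 0 ≤ x v₀ := hx.nonneg v₀
  refine ⟨3 / 4 * y v₀ * ‖x‖ + x v₀ * t, by positivity, fun v hv hne => ?_, ?_⟩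
  · obtain ⟨s, -, hs, hle⟩ := hstar v hv
    have hexcess : (0 : ℝ) ≤ K.degree v - H.degree v :=
      sub_nonneg.2 (mod_cast hH.degree_le_degree_of_ne hK hv hne)
    have hys : y v * s ≤ 3 / 4 * y v₀ * ‖x‖ :=
      (mul_le_mul_of_nonneg_left hs (hy.nonneg v)).trans <| mul_le_mul_of_nonneg_right
        (hH.apply_le_three_quarters_center hHT hy ha hv hne) (norm_nonneg x)
    refine hle.trans ?_
    gcongr
    exact hcenter v hv
  · obtain ⟨s, hs, -, hle⟩ := hstar v₀ hH.center_mem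
    have hexcess : (K.degree v₀ : ℝ) - H.degree v₀ ≤ 0 :=
      sub_nonpos.2 (mod_cast hH.degree_center_le_degree_center hK)
    refine hle.trans (add_le_add_right (mul_le_mul_of_nonpos_left ?_ hexcess) _)
    linarith [mul_le_mul_of_nonneg_left hs hy₀]

lemma degree_center_eq (hH : IsExtremal H a T B₁ B₂ v₀) (hHT : IsSparseSet H a T)
    (hK : IsSparseSet K a T) (hx : IsPerronVector K x) (hy : IsPerronVector H y)
    (hρ : H.spectralRadius ≤ K.spectralRadius)
    (htop : ∀ v ∈ T, IsTopSet x (H.neighborFinset v)) (hcenter : ∀ v ∈ T, x v ≤ x v₀) :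
    K.degree v₀ = H.degree v₀ := by
  refine (hH.degree_center_le_degree_center hK).antisymm ?_
  obtain ha | ha : 2 ≤ a ∨ a = 1 := by have := hK.pos; lia
  swap
  · have := hH.degree_center
    have := hK.le_degree v₀ hH.center_mem
    lia
  obtain ⟨c, hc, hne, hv₀⟩ := hH.exists_starWeight_le_of_two_le hHT hK hx hy htop hcenter ha
  have hsum := sum_starWeight_le_sum_starWeight hH.isClique_compl hK.isClique_compl
    hH.isIndepSet hx hy hρ
  have hrest := sum_le_sum fun v hv => hne v (mem_of_mem_erase hv) (ne_of_mem_erase hv)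
  have htotal : ∑ v ∈ T, ((K.degree v : ℝ) - H.degree v) ≤ 0 := by
    rw [sum_sub_distrib, sub_nonpos]
    exact mod_cast Nat.lt_succ_iff.1 (hK.sum_degree_lt.trans_eq hH.sum_degree.symm)
  have hmul := mul_nonpos_of_nonpos_of_nonneg htotal hc
  rw [sum_add_distrib, ← sum_mul] at hrest
  rw [← add_sum_erase T _ hH.center_mem, ← add_sum_erase T _ hH.center_mem] at hsum
  rw [← add_sum_erase T _ hH.center_mem] at hmul
  have hgain : 0 < y v₀ * ‖x‖ / 20 :=
    div_pos (mul_pos (hy.pos hH.preconnected v₀) hx.norm_pos) (by norm_num)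
  have hexcess : (0 : ℝ) ≤ K.degree v₀ - H.degree v₀ :=
    nonneg_of_mul_nonneg_left (by linarith) hgain
  exact Nat.cast_le.1 (sub_nonneg.1 hexcess)

lemma degree_eq (hH : IsExtremal H a T B₁ B₂ v₀) (hK : IsSparseSet K a T)
    (hcenter : K.degree v₀ = H.degree v₀) (hv : v ∈ T) : K.degree v = H.degree v := by
  have hle : ∀ u ∈ T, H.degree u ≤ K.degree u := fun u hu => by
    obtain rfl | hne := eq_or_ne u v₀
    exacts [hcenter.ge, hH.degree_le_degree_of_ne hK hu hne]
  have hsum : ∑ u ∈ T, K.degree u ≤ ∑ u ∈ T, H.degree u :=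
    Nat.lt_succ_iff.1 (hK.sum_degree_lt.trans_eq hH.sum_degree.symm)
  exact ((sum_eq_sum_iff_of_le hle).1 ((sum_le_sum hle).antisymm hsum) v hv).symm

lemma neighborFinset_eq (hH : IsExtremal H a T B₁ B₂ v₀) (hHT : IsSparseSet H a T)
    (hK : IsSparseSet K a T) (hx : IsPerronVector K x) (hy : IsPerronVector H y)
    (hρ : H.spectralRadius ≤ K.spectralRadius)
    (htop : ∀ v ∈ T, IsTopSet x (H.neighborFinset v))
    (hdeg : ∀ v ∈ T, #(K.neighborFinset v) = #(H.neighborFinset v)) (hv : v ∈ T) :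
    K.neighborFinset v = H.neighborFinset v := by
  have hstrict := fun v hv => hH.isStrictTopSet_neighborFinset hHT hy (v := v) hv
  have hsum_x := fun v hv => mul_le_mul_of_nonneg_left
    ((htop v hv).sum_le_sum (hdeg v hv)) (hy.nonneg v)
  have hsum_y := fun v hv => mul_le_mul_of_nonneg_left
    ((hstrict v hv).isTopSet.sum_le_sum (hdeg v hv)) (hx.nonneg v)
  have hle (v : V) (hv : v ∈ T) : starWeight K x y v ≤ starWeight H x y v :=
    add_le_add (hsum_x v hv) (hsum_y v hv)
  have hstar : starWeight K x y v = starWeight H x y v :=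
    (sum_eq_sum_iff_of_le hle).1 ((sum_le_sum hle).antisymm
      (sum_starWeight_le_sum_starWeight hH.isClique_compl hK.isClique_compl hH.isIndepSet hx hy
        hρ)) v hv
  rw [starWeight, starWeight] at hstar
  have hx_eq : ∑ u ∈ K.neighborFinset v, x u = ∑ u ∈ H.neighborFinset v, x u :=
    mul_left_cancel₀ (hy.pos hH.preconnected v).ne' (by linarith [hsum_x v hv, hsum_y v hv])
  have hxv : 0 < x v := by
    refine pos_of_mul_pos_right ?_ hK.spectralRadius_pos.le
    rw [← hx.sum_neighborFinset, hx_eq]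
    refine sum_pos (fun u hu => ?_) (hH.neighborFinset_nonempty hv)
    have hu' := hK.le_apply hx (hH.notMem_of_mem_outer (hH.neighborFinset_subset_outer hv hu))
    linarith [hx.norm_pos]
  refine (hstrict v hv).eq_of_sum_le (hdeg v hv) (le_of_mul_le_mul_left ?_ hxv)
  linarith [hsum_x v hv]

theorem eq_of_spectralRadius_le (hH : IsExtremal H a T B₁ B₂ v₀) (hHT : IsSparseSet H a T)
    (hK : IsSparseSet K a T) (hx : IsPerronVector K x)
    (hρ : H.spectralRadius ≤ K.spectralRadius)
    (htop : ∀ v ∈ T, IsTopSet x (H.neighborFinset v)) (hcenter : ∀ v ∈ T, x v ≤ x v₀) :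
    K = H := by
  have : Nonempty V := ⟨v₀⟩
  obtain ⟨y, hy⟩ := exists_isPerronVector H
  have hdeg (v : V) (hv : v ∈ T) : K.degree v = H.degree v :=
    hH.degree_eq hK (hH.degree_center_eq hHT hK hx hy hρ htop hcenter) hv
  have hadj (v w : V) (hv : v ∈ T) : K.Adj v w ↔ H.Adj v w := by
    rw [← SimpleGraph.mem_neighborFinset, ← SimpleGraph.mem_neighborFinset,
      hH.neighborFinset_eq hHT hK hx hy hρ htop (by simpa using hdeg) hv]
  ext v w
  by_cases hv : v ∈ T
  · exact hadj v w hv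
  by_cases hw : w ∈ T
  · rw [K.adj_comm, H.adj_comm, hadj w v hw]
  obtain rfl | hvw := eq_or_ne v w
  · exact iff_of_false K.irrefl H.irrefl
  · exact iff_of_true (hK.isClique_compl (by simpa using hv) (by simpa using hw) hvw)
      (hH.isClique_compl (by simpa using hv) (by simpa using hw) hvw)

end IsExtremal

end Comparison

/-! ### Completing the graph and sorting its vertices -/

section CompleteOff

variable {V : Type*} {G : SimpleGraph V} {T : Finset V}

/-- The graph obtained from `G` by making all vertices outside `T` pairwise adjacent. -/
def completeOff (G : SimpleGraph V) (T : Finset V) : SimpleGraph V :=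
  G ⊔ SimpleGraph.fromRel fun u v => u ∉ T ∧ v ∉ T

lemma le_completeOff (G : SimpleGraph V) (T : Finset V) : G ≤ completeOff G T := le_sup_left

lemma isClique_completeOff (G : SimpleGraph V) (T : Finset V) :
    (completeOff G T).IsClique (T : Set V)ᶜ := fun u hu v hv huv =>
  .inr ((SimpleGraph.fromRel_adj _ u v).2 ⟨huv, .inl ⟨by simpa using hu, by simpa using hv⟩⟩)

lemma completeOff_adj_of_mem {v w : V} (hv : v ∈ T) : (completeOff G T).Adj v w ↔ G.Adj v w := by
  simp [completeOff, hv]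

variable [Fintype V] [DecidableRel G.Adj] [DecidableRel (completeOff G T).Adj] {a : ℕ}

lemma degree_completeOff_of_mem {v : V} (hv : v ∈ T) :
    (completeOff G T).degree v = G.degree v := by
  rw [← SimpleGraph.card_neighborFinset_eq_degree, ← SimpleGraph.card_neighborFinset_eq_degree]
  congr 1
  ext w
  simp only [SimpleGraph.mem_neighborFinset, completeOff_adj_of_mem hv]

lemma isSparseSet_completeOff [DecidableEq V] [Nonempty V] (hδ : ∀ v ∈ T, a ≤ G.degree v)
    (hsum : ∑ v ∈ T, G.degree v < a * (#T + 1))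
    (hρ : 8 * (a : ℝ) + 5 * #T ≤ G.spectralRadius) : IsSparseSet (completeOff G T) a T where
  isClique_compl := isClique_completeOff G T
  le_degree v hv := (hδ v hv).trans_eq (degree_completeOff_of_mem hv).symm
  sum_degree_lt := (sum_congr rfl fun _ hv => degree_completeOff_of_mem hv).trans_lt hsum
  le_spectralRadius := hρ.trans (spectralRadius_mono (le_completeOff G T))

end CompleteOff

section Sorting

variable {V : Type*} {n : ℕ} {e : V ≃ Fin n} {x : V → ℝ}

lemma mem_iff_le_of_sorted {T : Finset V} (he : ∀ u v, e u ≤ e v → x v ≤ x u)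
    (hT : ∀ v ∈ T, ∀ w ∉ T, x v < x w) (v : V) : v ∈ T ↔ n - #T ≤ e v := by
  classical
  have := Fintype.ofEquiv _ e.symm
  have hlt (u w : V) (hu : u ∈ T) (hw : w ∉ T) : e w < e u :=
    not_le.1 fun h => (he u w h).not_gt (hT u hu w hw)
  refine ⟨fun hv => ?_, fun h => by_contra fun hv => ?_⟩
  · have hsub : Tᶜ.map e.toEmbedding ⊆ Iio (e v) := by
      rintro _ hi
      obtain ⟨u, hu, rfl⟩ := mem_map.1 hi
      exact mem_Iio.2 (hlt v u hv (mem_compl.1 hu))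
    have hcard := card_le_card hsub
    rwa [card_map, card_compl, Fin.card_Iio, Fintype.card_congr e, Fintype.card_fin] at hcard
  · have hsub : T.map e.toEmbedding ⊆ Ioi (e v) := by
      rintro _ hi
      obtain ⟨u, hu, rfl⟩ := mem_map.1 hi
      exact mem_Ioi.2 (hlt u v hu hv)
    have hcard := card_le_card hsub
    rw [card_map, Fin.card_Ioi] at hcard
    lia

variable [Fintype V]

lemma exists_equiv_fin_sorted (hV : Fintype.card V = n) (x : V → ℝ) :
    ∃ e : V ≃ Fin n, ∀ u v, e u ≤ e v → x v ≤ x u := by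
  let e₀ := Fintype.equivFinOfCardEq hV
  let σ := Tuple.sort fun i => -x (e₀.symm i)
  refine ⟨e₀.trans σ.symm, fun u v huv => neg_le_neg_iff.1 ?_⟩
  simpa [σ] using Tuple.monotone_sort (fun i => -x (e₀.symm i)) huv

lemma isTopSet_filter_lt (he : ∀ u v, e u ≤ e v → x v ≤ x u) (k : ℕ) :
    IsTopSet x ({u | (e u : ℕ) < k} : Finset V) := fun u hu w hw => he u w <| Fin.le_def.2 <| by
  simp only [mem_filter_univ] at hu hw
  lia

lemma card_filter_equiv_lt (e : V ≃ Fin n) {k : ℕ} (hk : k ≤ n) :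
    #{u | (e u : ℕ) < k} = k := by
  have hmap : ({u | (e u : ℕ) < k} : Finset V).map e.toEmbedding =
      ({i | (i : ℕ) < k} : Finset (Fin n)) := by
    ext i
    simp
  rw [← card_map e.toEmbedding, hmap, Fin.card_filter_val_lt, min_eq_right hk]

end Sorting

/-! ### The graph `H_n^{a,b}` -/

section Hgraph

variable {a b n : ℕ}

lemma Hgraph_adj_of_le (hn : 2 * a + b ≤ n) {i j : Fin n} (hi : n - b - 1 ≤ i) :
    (Hgraph n a b).Adj i j ↔ (j : ℕ) < a ∨ (i : ℕ) = n - b - 1 ∧ (j : ℕ) < 2 * a - 1 := by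
  rw [Hgraph, SimpleGraph.fromRel_adj, Ne, Fin.ext_iff]
  omega

lemma isClique_Hgraph : (Hgraph n a b).IsClique {i | (i : ℕ) < n - b - 1} := fun i hi j hj hij =>
  (SimpleGraph.fromRel_adj _ i j).2 ⟨hij, .inl (.inr (.inl ⟨hi, hj⟩))⟩

lemma sub_two_le_spectralRadius_Hgraph (hn : b + 2 ≤ n) :
    (n : ℝ) - b - 2 ≤ (Hgraph n a b).spectralRadius := by
  have hcard : #{i : Fin n | (i : ℕ) < n - b - 1} = n - b - 1 := by
    rw [Fin.card_filter_val_lt, min_eq_right (by lia)]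
  have hclique := card_sub_one_le_spectralRadius_of_isClique
    (s := ({i : Fin n | (i : ℕ) < n - b - 1} : Finset (Fin n))) (G := Hgraph n a b)
    (by simpa using isClique_Hgraph) (card_pos.1 (by lia))
  rw [hcard, Nat.sub_sub, Nat.cast_sub (by lia)] at hclique
  push_cast at hclique
  linarith

variable {V : Type*} [Fintype V] {T : Finset V}

lemma isExtremal_comap_Hgraph (ha : 0 < a) (hn : 2 * a + b ≤ n) (e : V ≃ Fin n)
    [DecidableRel ((Hgraph n a b).comap e).Adj] (hT : ∀ v, v ∈ T ↔ n - b - 1 ≤ e v) :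
    IsExtremal ((Hgraph n a b).comap e) a T {u | (e u : ℕ) < a} {u | (e u : ℕ) < 2 * a - 1}
      (e.symm ⟨n - b - 1, by lia⟩) where
  isClique_compl u hu v hv huv := isClique_Hgraph
    (not_le.1 fun h => hu ((hT u).2 h)) (not_le.1 fun h => hv ((hT v).2 h)) (e.injective.ne huv)
  center_mem := by simp [hT]
  subset := monotone_filter_right _ fun u _ hu => by lia
  disjoint := disjoint_left.2 fun u hu huT => by
    rw [mem_filter_univ] at hu
    rw [hT] at huT
    lia
  card_inner := card_filter_equiv_lt e (by lia)
  card_outer := by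
    rw [card_filter_equiv_lt e (by lia)]
    lia
  neighborFinset_of_ne v hv hne := by
    have hne' : (e v : ℕ) ≠ n - b - 1 := fun h => hne (by simp [← h])
    ext u
    simp [Hgraph_adj_of_le hn ((hT v).1 hv), hne']
  neighborFinset_center := by
    ext u
    rw [SimpleGraph.mem_neighborFinset, SimpleGraph.comap_adj, Equiv.apply_symm_apply,
      Hgraph_adj_of_le hn le_rfl, mem_filter_univ]
    lia

variable [DecidableEq V]

theorem nonempty_iso_Hgraph_of_sum_degree_lt (hn : 8 * a + 6 * b + 7 ≤ n)
    (hV : Fintype.card V = n) {G : SimpleGraph V} [DecidableRel G.Adj] (hT : #T = b + 1)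
    (hδ : ∀ v ∈ T, a ≤ G.degree v) (hsum : ∑ v ∈ T, G.degree v < a * (#T + 1))
    (hρ : (Hgraph n a b).spectralRadius ≤ G.spectralRadius) : Nonempty (G ≃g Hgraph n a b) := by
  classical
  have : Nonempty V := Fintype.card_pos_iff.1 (by lia)
  have : Nonempty (Fin n) := ⟨⟨0, by lia⟩⟩
  have hlarge : 8 * (a : ℝ) + 5 * #T ≤ (Hgraph n a b).spectralRadius := by
    have hn' : 8 * (a : ℝ) + 6 * b + 7 ≤ n := mod_cast hn
    rw [hT, Nat.cast_add_one]
    linarith [sub_two_le_spectralRadius_Hgraph (a := a) (by lia : b + 2 ≤ n)]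
  have hK : IsSparseSet (completeOff G T) a T :=
    isSparseSet_completeOff hδ hsum (hlarge.trans hρ)
  obtain ⟨x, hx⟩ := exists_isPerronVector (completeOff G T)
  obtain ⟨e, he⟩ := exists_equiv_fin_sorted hV x
  have hmem : ∀ v, v ∈ T ↔ n - b - 1 ≤ e v := by
    simpa [hT, Nat.sub_sub] using
      mem_iff_le_of_sorted he fun v hv w hw => hK.apply_lt_apply hx hv hw
  have hH := isExtremal_comap_Hgraph hK.pos (by lia : 2 * a + b ≤ n) e hmem
  have hρH : ((Hgraph n a b).comap e).spectralRadius = (Hgraph n a b).spectralRadius :=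
    spectralRadius_eq_of_iso (SimpleGraph.Iso.comap e _)
  have hKH : completeOff G T = (Hgraph n a b).comap e := by
    refine hH.eq_of_spectralRadius_le (hH.isSparseSet (hρH ▸ hlarge)) hK hx
      (hρH.trans_le (hρ.trans (spectralRadius_mono (le_completeOff G T)))) (fun v hv => ?_)
      fun v hv => he _ v (by simpa [Fin.le_def] using (hmem v).1 hv)
    obtain rfl | hne := eq_or_ne v (e.symm ⟨n - b - 1, by lia⟩)
    · exact hH.neighborFinset_center ▸ isTopSet_filter_lt he _
    · exact hH.neighborFinset_of_ne v hv hne ▸ isTopSet_filter_lt he _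
  have hG : G = (Hgraph n a b).comap e :=
    eq_of_le_of_spectralRadius_le (hKH ▸ le_completeOff G T) hH.preconnected (hρH.trans_le hρ)
  exact ⟨hG ▸ SimpleGraph.Iso.comap e _⟩

end Hgraph

theorem spectral_radius_fractional_abFactor_general {V : Type*} [Fintype V] [DecidableEq V]
    {a b n : ℕ} (ha : 0 < a) (hab : a < b) (hn : 2 * (a + b + 2) * (b + 2) ≤ n)
    (hV : Fintype.card V = n) (G : SimpleGraph V) [DecidableRel G.Adj]
    (hδ : ∀ v, a ≤ G.degree v) (hρ : (Hgraph n a b).spectralRadius ≤ G.spectralRadius) :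
    G.HasFractionalABFactor a b ∨ Nonempty (G ≃g Hgraph n a b) := by
  refine or_iff_not_imp_left.2 fun hG => ?_
  have hlarge : 8 * a + 6 * b + 7 ≤ n := by nlinarith
  have hρG : (Fintype.card V : ℝ) - b - 2 ≤ G.spectralRadius :=
    hV ▸ (sub_two_le_spectralRadius_Hgraph (by lia)).trans hρ
  obtain ⟨T, hT, hsum⟩ := exists_card_eq_and_sum_degree_lt ha hab (hV ▸ hn) hδ hρG hG
  exact nonempty_iso_Hgraph_of_sum_degree_lt hlarge hV hT (fun v _ => hδ v) hsum hρ

/-- **Theorem (spectral condition for a fractional `[a,b]`-factor).** -/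
theorem spectral_radius_fractional_abFactor (a b n : ℕ) (ha : 0 < a) (hab : a < b)
    (hn : 2 * (a + b + 2) * (b + 2) ≤ n)
    (G : SimpleGraph (Fin n)) [DecidableRel G.Adj]
    (hconn : G.Connected) (hδ : ∀ v, a ≤ G.degree v)
    (hρ : (Hgraph n a b).spectralRadius ≤ G.spectralRadius) :
    G.HasFractionalABFactor a b ∨ Nonempty (G ≃g Hgraph n a b) :=
  spectral_radius_fractional_abFactor_general ha hab hn (Fintype.card_fin n) G hδ hρ
end

section
/- Let G be a connected graph and let u, v be two vertices of G. Suppose v_1, v_2, …, v_s ∈ N_G(v)\N_G(u) with s ≥ 1, and let G* be the graph obtained from G by deleting the edges vv_i and adding the edges uv_i for 1 ≤ i ≤ s. Let x be the Perron vector of the adjacency matrix A(G) (a positive eigenvector corresponding to ρ(G)). If x(u) ≥ x(v), then ρ(G) < ρ(G*). -/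
open Finset Matrix

/-!
Let `A` and `B` be the adjacency matrices of `G` and of the rotated graph, let `c` be the indicator
vector of the moved neighbours and `d = e_u - e_v`. Then `B = A + d cᵀ + c dᵀ`, so that
`xᵀ B x = xᵀ A x + 2 (c ⬝ x) (x u - x v) ≥ xᵀ A x`, and the Rayleigh quotient of `x` does not drop.
If nevertheless the largest eigenvalue did not increase, then `x` would maximise the Rayleigh
quotient of `B` and hence be an eigenvector of `B` for the old eigenvalue. This fails at the
coordinate `u`, where passing from `A` to `B` adds `c ⬝ x > 0`.
-/

section LargestEigenvalue

open scoped ComplexOrder MatrixOrder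

variable {n 𝕜 : Type*} [Fintype n] [DecidableEq n] [RCLike 𝕜] {B : Matrix n n 𝕜}

theorem posSemidef_iSup_eigenvalues_smul_one_sub (hB : B.IsHermitian) :
    ((⨆ i, hB.eigenvalues i) • (1 : Matrix n n 𝕜) - B).PosSemidef := by
  rw [← le_iff, ← Algebra.algebraMap_eq_smul_one]
  refine le_algebraMap_of_spectrum_le (ha := hB.isSelfAdjoint) fun r hr => ?_
  rw [hB.spectrum_real_eq_range_eigenvalues] at hr
  obtain ⟨j, rfl⟩ := hr
  exact le_ciSup (Set.finite_range _).bddAbove j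

theorem lt_iSup_eigenvalues_of_le_dotProduct_mulVec (hB : B.IsHermitian) {t : ℝ} {x : n → 𝕜}
    (hle : t • (star x ⬝ᵥ x) ≤ star x ⬝ᵥ (B *ᵥ x)) (hne : B *ᵥ x ≠ t • x) :
    t < ⨆ i, hB.eigenvalues i := by
  by_contra! hμt
  set μ := ⨆ i, hB.eigenvalues i
  have hpsd : (μ • (1 : Matrix n n 𝕜) - B).PosSemidef :=
    posSemidef_iSup_eigenvalues_smul_one_sub hB
  have happly : (μ • (1 : Matrix n n 𝕜) - B) *ᵥ x = μ • x - B *ᵥ x := by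
    rw [sub_mulVec, smul_mulVec, one_mulVec]
  have hform : star x ⬝ᵥ ((μ • (1 : Matrix n n 𝕜) - B) *ᵥ x) =
      μ • (star x ⬝ᵥ x) - star x ⬝ᵥ (B *ᵥ x) := by
    rw [happly, dotProduct_sub, dotProduct_smul]
  have hμ_ge : star x ⬝ᵥ (B *ᵥ x) ≤ μ • (star x ⬝ᵥ x) :=
    sub_nonneg.mp (hform ▸ hpsd.dotProduct_mulVec_nonneg x)
  have hμ_le : μ • (star x ⬝ᵥ x) ≤ t • (star x ⬝ᵥ x) :=
    smul_le_smul_of_nonneg_right hμt (dotProduct_star_self_nonneg x)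
  have hBx : B *ᵥ x = μ • x := by
    have hzero : star x ⬝ᵥ ((μ • (1 : Matrix n n 𝕜) - B) *ᵥ x) = 0 := by
      rw [hform, sub_eq_zero]
      exact (hμ_le.trans hle).antisymm hμ_ge
    rw [hpsd.dotProduct_mulVec_zero_iff, happly, sub_eq_zero] at hzero
    exact hzero.symm
  have hx : x ≠ 0 := by
    rintro rfl
    simp at hne
  have hμ_eq : μ • (star x ⬝ᵥ x) = t • (star x ⬝ᵥ x) := hμ_le.antisymm (hle.trans hμ_ge)
  have hμt_eq : μ = t := smul_left_injective ℝ (dotProduct_star_self_eq_zero.not.mpr hx) hμ_eq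
  exact hne (hμt_eq ▸ hBx)

theorem lt_spectralRadius_of_le_dotProduct_mulVec {V : Type*} [Fintype V] [DecidableEq V]
    (G : SimpleGraph V) [inst : DecidableRel G.Adj] {t : ℝ} {x : V → ℝ}
    (hle : t * (x ⬝ᵥ x) ≤ x ⬝ᵥ (G.adjMatrix ℝ *ᵥ x)) (hne : G.adjMatrix ℝ *ᵥ x ≠ t • x) :
    t < G.spectralRadius := by
  rw [Subsingleton.elim inst (Classical.decRel G.Adj)] at hle hne
  exact lt_iSup_eigenvalues_of_le_dotProduct_mulVec _ hle hne

end LargestEigenvalue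

theorem indicator_one_dotProduct_pos {V R : Type*} [Fintype V] [NonAssocSemiring R]
    [PartialOrder R] [IsOrderedCancelAddMonoid R] {S : Set V} {x : V → R}
    (hx : 0 ≤ x) (hxS : ∃ w ∈ S, 0 < x w) :
    0 < S.indicator 1 ⬝ᵥ x := by
  classical
  obtain ⟨w, hwS, hxw⟩ := hxS
  refine Finset.sum_pos' (fun a _ => ?_) ⟨w, mem_univ w, by simpa [hwS] using hxw⟩
  by_cases ha : a ∈ S
  · simpa [ha] using hx a
  · simp [ha]

section EdgeRotation

variable {V : Type*}

/-- The rotation of edges from `v` to `u`: the edges of `G` from `v` to `S` are deleted and `u` is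
joined to `S` instead. No neighbourhood condition on `S` is built in; `fromEdgeSet` drops the
loop that would arise from `u ∈ S`. -/
def edgeRotation (G : SimpleGraph V) (u v : V) (S : Set V) : SimpleGraph V :=
  G.deleteEdges ((s(v, ·)) '' S) ⊔ SimpleGraph.fromEdgeSet ((s(u, ·)) '' S)

variable {G : SimpleGraph V} {u v : V} {S : Set V}

theorem sym2_mk_mem_image_iff {a b z : V} :
    s(a, b) ∈ (s(z, ·)) '' S ↔ (a = z ∧ b ∈ S) ∨ (b = z ∧ a ∈ S) := by
  simp only [Set.mem_image, Sym2.eq_iff]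
  grind

theorem edgeRotation_adj {a b : V} :
    (edgeRotation G u v S).Adj a b ↔
      (G.Adj a b ∧ ¬((a = v ∧ b ∈ S) ∨ (b = v ∧ a ∈ S))) ∨
        (((a = u ∧ b ∈ S) ∨ (b = u ∧ a ∈ S)) ∧ a ≠ b) := by
  rw [edgeRotation, SimpleGraph.sup_adj, SimpleGraph.deleteEdges_adj,
    SimpleGraph.fromEdgeSet_adj, sym2_mk_mem_image_iff, sym2_mk_mem_image_iff]

theorem edgeRotation_range {ι : Type*} (f : ι → V) :
    edgeRotation G u v (Set.range f) =
      G.deleteEdges (Set.range fun i => s(v, f i)) ⊔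
        SimpleGraph.fromEdgeSet (Set.range fun i => s(u, f i)) := by
  simp only [edgeRotation, ← Set.range_comp, Function.comp_def]

variable [DecidableRel G.Adj] [DecidableRel (edgeRotation G u v S).Adj]

theorem adjMatrix_edgeRotation [DecidableEq V] {R : Type*} [NonAssocRing R]
    (hS : S ⊆ G.neighborSet v \ G.neighborSet u) (hu : u ∉ S) :
    (edgeRotation G u v S).adjMatrix R = G.adjMatrix R +
      vecMulVec (Pi.single u 1 - Pi.single v 1) (S.indicator 1) +
      vecMulVec (S.indicator 1) (Pi.single u 1 - Pi.single v 1) := by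
  classical
  ext a b
  have hadj_v {w : V} (hw : w ∈ S) : G.Adj v w := (hS hw).1
  have hnot_adj_u {w : V} (hw : w ∈ S) : ¬G.Adj u w := (hS hw).2
  have hv : v ∉ S := fun hvS => G.irrefl (hadj_v hvS)
  have hcomm := G.adj_comm a b
  by_cases haS : a ∈ S <;> by_cases hbS : b ∈ S <;>
    simp only [Matrix.add_apply, SimpleGraph.adjMatrix_apply, edgeRotation_adj, vecMulVec_apply,
      Pi.sub_apply, Pi.single_apply, Set.indicator_apply, Pi.one_apply, haS, hbS, if_true, if_false,
      mul_one, mul_zero, one_mul, zero_mul, add_zero] <;>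
    grind

variable [Fintype V]

theorem adjMatrix_edgeRotation_mulVec [DecidableEq V] {R : Type*} [CommRing R]
    (hS : S ⊆ G.neighborSet v \ G.neighborSet u) (hu : u ∉ S) (x : V → R) :
    (edgeRotation G u v S).adjMatrix R *ᵥ x = G.adjMatrix R *ᵥ x +
      (S.indicator 1 ⬝ᵥ x) • (Pi.single u 1 - Pi.single v 1) +
      (x u - x v) • S.indicator 1 := by
  rw [adjMatrix_edgeRotation hS hu, add_mulVec, add_mulVec, vecMulVec_mulVec, vecMulVec_mulVec,
    sub_dotProduct, single_one_dotProduct, single_one_dotProduct, op_smul_eq_smul,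
    op_smul_eq_smul]

theorem dotProduct_adjMatrix_edgeRotation_mulVec {R : Type*} [CommRing R]
    (hS : S ⊆ G.neighborSet v \ G.neighborSet u) (hu : u ∉ S) (x : V → R) :
    x ⬝ᵥ ((edgeRotation G u v S).adjMatrix R *ᵥ x) =
      x ⬝ᵥ (G.adjMatrix R *ᵥ x) + 2 * ((S.indicator 1 ⬝ᵥ x) * (x u - x v)) := by
  classical
  rw [adjMatrix_edgeRotation_mulVec hS hu, dotProduct_add, dotProduct_add, dotProduct_smul,
    dotProduct_smul, dotProduct_sub, dotProduct_single_one, dotProduct_single_one,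
    dotProduct_comm x (S.indicator 1), smul_eq_mul, smul_eq_mul]
  ring

theorem adjMatrix_edgeRotation_mulVec_apply_left {R : Type*} [CommRing R]
    (hS : S ⊆ G.neighborSet v \ G.neighborSet u) (hu : u ∉ S) (huv : u ≠ v) (x : V → R) :
    ((edgeRotation G u v S).adjMatrix R *ᵥ x) u =
      (G.adjMatrix R *ᵥ x) u + S.indicator 1 ⬝ᵥ x := by
  classical
  rw [adjMatrix_edgeRotation_mulVec hS hu]
  simp [-SimpleGraph.adjMatrix_mulVec_apply, hu, huv]

end EdgeRotation

theorem rotation_spectralRadius_lt_general {V : Type*} [Fintype V] [DecidableEq V]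
    (G : SimpleGraph V) [DecidableRel G.Adj] {u v : V} {S : Set V}
    (hS : S ⊆ G.neighborSet v \ G.neighborSet u) (hu : u ∉ S)
    {x : V → ℝ} (hx : 0 ≤ x) (hxS : ∃ w ∈ S, 0 < x w)
    {t : ℝ} (ht : t • x ≤ G.adjMatrix ℝ *ᵥ x) (hxuv : x v ≤ x u) :
    t < (edgeRotation G u v S).spectralRadius := by
  classical
  have huv : u ≠ v := by
    rintro rfl
    obtain ⟨w, hwS, -⟩ := hxS
    exact (hS hwS).2 (hS hwS).1
  have hpos : 0 < S.indicator 1 ⬝ᵥ x := indicator_one_dotProduct_pos hx hxS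
  apply lt_spectralRadius_of_le_dotProduct_mulVec (x := x)
  · calc t * (x ⬝ᵥ x) = x ⬝ᵥ (t • x) := by rw [dotProduct_smul, smul_eq_mul]
      _ ≤ x ⬝ᵥ (G.adjMatrix ℝ *ᵥ x) := dotProduct_le_dotProduct_of_nonneg_left ht hx
      _ ≤ x ⬝ᵥ (G.adjMatrix ℝ *ᵥ x) + 2 * ((S.indicator 1 ⬝ᵥ x) * (x u - x v)) :=
        le_add_of_nonneg_right
          (mul_nonneg zero_le_two (mul_nonneg hpos.le (sub_nonneg.mpr hxuv)))
      _ = x ⬝ᵥ ((edgeRotation G u v S).adjMatrix ℝ *ᵥ x) :=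
        (dotProduct_adjMatrix_edgeRotation_mulVec hS hu x).symm
  · refine fun heq => (congrFun heq u).not_gt ?_
    rw [adjMatrix_edgeRotation_mulVec_apply_left hS hu huv]
    exact lt_add_of_le_of_pos (ht u) hpos

/-- **Lemma 2.1 (edge switching).** Let `G` be connected, `v₁,…,v_s ∈ N_G(v) \ N_G(u)`
(`s ≥ 1`), and let `G*` be obtained from `G` by deleting the edges `v vᵢ` and adding the
edges `u vᵢ`. If `x` is the Perron vector of `A(G)` and `x(u) ≥ x(v)`, then `ρ(G) < ρ(G*)`. -/
theorem rotation_spectralRadius_lt {V : Type*} [Fintype V] [DecidableEq V]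
    (G : SimpleGraph V) [DecidableRel G.Adj] (hconn : G.Connected)
    (u v : V) (s : ℕ) (hs : 1 ≤ s) (f : Fin s → V) (hinj : Function.Injective f)
    (hf : ∀ i, f i ∈ G.neighborSet v \ G.neighborSet u) (hfu : ∀ i, f i ≠ u)
    (Gstar : SimpleGraph V)
    (hGstar : Gstar = (G.deleteEdges (Set.range fun i => s(v, f i))) ⊔
      SimpleGraph.fromEdgeSet (Set.range fun i => s(u, f i)))
    (x : V → ℝ) (hx : ∀ w, 0 < x w)
    (heig : G.adjMatrix ℝ *ᵥ x = G.spectralRadius • x)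
    (hxuv : x v ≤ x u) :
    G.spectralRadius < Gstar.spectralRadius := by
  rw [hGstar, ← edgeRotation_range]
  exact rotation_spectralRadius_lt_general G (Set.range_subset_iff.mpr hf)
    (fun ⟨i, hi⟩ => hfu i hi) (fun w => (hx w).le) ⟨f ⟨0, hs⟩, ⟨_, rfl⟩, hx _⟩ heig.ge hxuv
end
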